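/- arXiv:2001.01607 — 2 statements merged into one kernel-verified Lean document; each statement's English description precedes it below -/
import Mathlib

section
/- Let G be a (theta, triangle)-free graph. If W = (H, {u, v}) is a 2-wheel in G such that uv ∉ E(G), then W is either a nested wheel or the cube. -/
open SimpleGraph

variable {V : Type} [Fintype V] [DecidableEq V]

/-- `p` is a chordless (induced) path in `G`: a path such that the only edges of `G`
between its vertices are the edges of the path. -/
def IsInducedPathW (G : SimpleGraph V) {a b : V} (p : G.Walk a b) : Prop :=
  p.IsPath ∧ ∀ u v : V, u ∈ p.support → v ∈ p.support → G.Adj u v → p.toSubgraph.Adj u v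

/-- A hole of length `n` in `G`: an induced (chordless) cycle of length `n ≥ 4`,
given by an injection of `ZMod n` into `G` whose adjacencies are exactly the consecutive ones. -/
def IsHoleEmb (G : SimpleGraph V) (n : ℕ) (f : ZMod n → V) : Prop :=
  4 ≤ n ∧ Function.Injective f ∧
    ∀ i j : ZMod n, G.Adj (f i) (f j) ↔ (j = i + 1 ∨ i = j + 1)

/-- `G` contains an even hole (induced even cycle of length at least 4). -/
def ContainsEvenHole (G : SimpleGraph V) : Prop :=
  ∃ (n : ℕ) (f : ZMod n → V), IsHoleEmb G n f ∧ Even n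

/-- `G` contains a square (hole of length 4). -/
def ContainsSquare (G : SimpleGraph V) : Prop :=
  ∃ f : ZMod 4 → V, IsHoleEmb G 4 f

/-- `G` contains a theta as an induced subgraph: three internally vertex-disjoint chordless
paths from `a` to `b`, each of length at least 2, with no edges between the paths other than
those incident to `a` or `b` specified by the paths. -/
def ContainsTheta (G : SimpleGraph V) : Prop :=
  ∃ (a b : V) (p₁ p₂ p₃ : G.Walk a b),
    (IsInducedPathW G p₁ ∧ IsInducedPathW G p₂ ∧ IsInducedPathW G p₃) ∧
    (2 ≤ p₁.length ∧ 2 ≤ p₂.length ∧ 2 ≤ p₃.length) ∧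
    (∀ w : V, ((w ∈ p₁.support ∧ w ∈ p₂.support) ∨ (w ∈ p₁.support ∧ w ∈ p₃.support) ∨
          (w ∈ p₂.support ∧ w ∈ p₃.support)) → (w = a ∨ w = b)) ∧
    (∀ u w : V, u ≠ a → u ≠ b → w ≠ a → w ≠ b →
      ((u ∈ p₁.support ∧ w ∈ p₂.support) ∨ (u ∈ p₁.support ∧ w ∈ p₃.support) ∨
       (u ∈ p₂.support ∧ w ∈ p₃.support)) → ¬G.Adj u w)

/-- `G` contains a prism as an induced subgraph. -/
def ContainsPrism (G : SimpleGraph V) : Prop :=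
  ∃ (a₁ b₁ a₂ b₂ a₃ b₃ : V) (p₁ : G.Walk a₁ b₁) (p₂ : G.Walk a₂ b₂) (p₃ : G.Walk a₃ b₃),
    (IsInducedPathW G p₁ ∧ IsInducedPathW G p₂ ∧ IsInducedPathW G p₃) ∧
    (1 ≤ p₁.length ∧ 1 ≤ p₂.length ∧ 1 ≤ p₃.length) ∧
    (G.Adj a₁ a₂ ∧ G.Adj a₂ a₃ ∧ G.Adj a₁ a₃) ∧
    (G.Adj b₁ b₂ ∧ G.Adj b₂ b₃ ∧ G.Adj b₁ b₃) ∧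
    (∀ w : V, ¬(w ∈ p₁.support ∧ w ∈ p₂.support) ∧ ¬(w ∈ p₁.support ∧ w ∈ p₃.support) ∧
          ¬(w ∈ p₂.support ∧ w ∈ p₃.support)) ∧
    (∀ u w : V, u ∈ p₁.support → w ∈ p₂.support → G.Adj u w →
      (u = a₁ ∧ w = a₂) ∨ (u = b₁ ∧ w = b₂)) ∧
    (∀ u w : V, u ∈ p₁.support → w ∈ p₃.support → G.Adj u w →
      (u = a₁ ∧ w = a₃) ∨ (u = b₁ ∧ w = b₃)) ∧
    (∀ u w : V, u ∈ p₂.support → w ∈ p₃.support → G.Adj u w →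
      (u = a₂ ∧ w = a₃) ∨ (u = b₂ ∧ w = b₃))

/-- `G` contains a pyramid as an induced subgraph. -/
def ContainsPyramid (G : SimpleGraph V) : Prop :=
  ∃ (a b₁ b₂ b₃ : V) (p₁ : G.Walk a b₁) (p₂ : G.Walk a b₂) (p₃ : G.Walk a b₃),
    (IsInducedPathW G p₁ ∧ IsInducedPathW G p₂ ∧ IsInducedPathW G p₃) ∧
    (1 ≤ p₁.length ∧ 1 ≤ p₂.length ∧ 1 ≤ p₃.length) ∧
    ((2 ≤ p₁.length ∧ 2 ≤ p₂.length) ∨ (2 ≤ p₁.length ∧ 2 ≤ p₃.length) ∨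
     (2 ≤ p₂.length ∧ 2 ≤ p₃.length)) ∧
    (G.Adj b₁ b₂ ∧ G.Adj b₂ b₃ ∧ G.Adj b₁ b₃) ∧
    (∀ w : V, ((w ∈ p₁.support ∧ w ∈ p₂.support) ∨ (w ∈ p₁.support ∧ w ∈ p₃.support) ∨
          (w ∈ p₂.support ∧ w ∈ p₃.support)) → w = a) ∧
    (∀ u w : V, u ∈ p₁.support → w ∈ p₂.support → u ≠ a → w ≠ a → G.Adj u w →
      u = b₁ ∧ w = b₂) ∧
    (∀ u w : V, u ∈ p₁.support → w ∈ p₃.support → u ≠ a → w ≠ a → G.Adj u w →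
      u = b₁ ∧ w = b₃) ∧
    (∀ u w : V, u ∈ p₂.support → w ∈ p₃.support → u ≠ a → w ≠ a → G.Adj u w →
      u = b₂ ∧ w = b₃)

/-- `G` contains the cube as an induced subgraph: a hole of length 6 together with
two non-adjacent vertices `u, v` outside it, `u` adjacent to the even positions and
`v` adjacent to the odd positions. -/
def ContainsCube (G : SimpleGraph V) : Prop :=
  ∃ (f : ZMod 6 → V) (u v : V), IsHoleEmb G 6 f ∧
    u ∉ Set.range f ∧ v ∉ Set.range f ∧ ¬G.Adj u v ∧
    (∀ m : ZMod 6, G.Adj u (f m) ↔ (m = 0 ∨ m = 2 ∨ m = 4)) ∧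
    (∀ m : ZMod 6, G.Adj v (f m) ↔ (m = 1 ∨ m = 3 ∨ m = 5))

/-- `G` contains an even wheel: a hole plus a vertex outside it having at least 3 and
an even number of neighbors on the hole. -/
def ContainsEvenWheel (G : SimpleGraph V) : Prop :=
  ∃ (n : ℕ) (f : ZMod n → V) (u : V), IsHoleEmb G n f ∧ u ∉ Set.range f ∧
    3 ≤ {m : ZMod n | G.Adj u (f m)}.ncard ∧ Even {m : ZMod n | G.Adj u (f m)}.ncard

/-- `G` contains a butterfly: a wheel `(H,v)` with `N_H(v) = {a,b,c,d}`,
`ab, cd ∈ E(G)` and `bc, da ∉ E(G)`. -/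
def ContainsButterfly (G : SimpleGraph V) : Prop :=
  ∃ (n : ℕ) (f : ZMod n → V) (u : V), IsHoleEmb G n f ∧ u ∉ Set.range f ∧
    ∃ i j : ZMod n, i ≠ j ∧ i ≠ j + 1 ∧ i + 1 ≠ j ∧ i + 1 ≠ j + 1 ∧
      ¬G.Adj (f (i + 1)) (f j) ∧ ¬G.Adj (f (j + 1)) (f i) ∧
      (∀ m : ZMod n, G.Adj u (f m) ↔ (m = i ∨ m = i + 1 ∨ m = j ∨ m = j + 1))

/-- A 2-wheel in `G`: a hole `f` together with two distinct centers `u, v` outside the hole,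
each having at least three neighbors on the hole. -/
def Is2WheelCfg (G : SimpleGraph V) (n : ℕ) (f : ZMod n → V) (u v : V) : Prop :=
  IsHoleEmb G n f ∧ u ≠ v ∧ u ∉ Set.range f ∧ v ∉ Set.range f ∧
  3 ≤ {m : ZMod n | G.Adj u (f m)}.ncard ∧ 3 ≤ {m : ZMod n | G.Adj v (f m)}.ncard

/-- The 2-wheel `(f, {u,v})` is nested: the hole splits at `f i` and `f (i+d)` into two arcs,
with all neighbors of `u` on one arc and all neighbors of `v` on the other. -/
def NestedCfg (G : SimpleGraph V) (n : ℕ) (f : ZMod n → V) (u v : V) : Prop :=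
  ∃ (i : ZMod n) (d : ℕ), 1 ≤ d ∧ d < n ∧
    (∀ m : ZMod n, G.Adj u (f m) → ∃ e : ℕ, e ≤ d ∧ m = i + (e : ZMod n)) ∧
    (∀ m : ZMod n, G.Adj v (f m) → ∃ e : ℕ, e ≤ n - d ∧ m = i + (d : ZMod n) + (e : ZMod n))

/-- The 2-wheel `(f, {u,v})` is the cube. -/
def CubeCfg (G : SimpleGraph V) (n : ℕ) (f : ZMod n → V) (u v : V) : Prop :=
  n = 6 ∧ ∃ i : ZMod n,
    (∀ m : ZMod n, G.Adj u (f m) ↔ (m = i ∨ m = i + 2 ∨ m = i + 4)) ∧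
    (∀ m : ZMod n, G.Adj v (f m) ↔ (m = i + 1 ∨ m = i + 3 ∨ m = i + 5))

/-- The 2-wheel `(f, {u,v})` is a cousin wheel: `N_H(u) = {h₁,h₂,h₃}` and
`N_H(v) = {h₂,h₃,h₄}` for four consecutive vertices of the hole (or with `u, v` swapped). -/
def CousinCfg (G : SimpleGraph V) (n : ℕ) (f : ZMod n → V) (u v : V) : Prop :=
  (∃ i : ZMod n,
    (∀ m : ZMod n, G.Adj u (f m) ↔ (m = i ∨ m = i + 1 ∨ m = i + 2)) ∧
    (∀ m : ZMod n, G.Adj v (f m) ↔ (m = i + 1 ∨ m = i + 2 ∨ m = i + 3))) ∨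
  (∃ i : ZMod n,
    (∀ m : ZMod n, G.Adj v (f m) ↔ (m = i ∨ m = i + 1 ∨ m = i + 2)) ∧
    (∀ m : ZMod n, G.Adj u (f m) ↔ (m = i + 1 ∨ m = i + 2 ∨ m = i + 3)))

/-- A `u`-sector of the hole `f`: a subpath from `f i` to `f (i+d)` (`1 ≤ d < n`)
whose two ends are adjacent to `u` and whose internal vertices are not. -/
def IsSector (G : SimpleGraph V) (n : ℕ) (f : ZMod n → V) (u : V) (i : ZMod n) (d : ℕ) : Prop :=
  1 ≤ d ∧ d < n ∧ G.Adj u (f i) ∧ G.Adj u (f (i + (d : ZMod n))) ∧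
    ∀ m : ℕ, 0 < m → m < d → ¬G.Adj u (f (i + (m : ZMod n)))

/-- The class 𝒞: (theta, prism, pyramid, butterfly)-free graphs in which every 2-wheel
with non-adjacent centers is a nested wheel or a cousin wheel. -/
def InClassC (G : SimpleGraph V) : Prop :=
  ¬ContainsTheta G ∧ ¬ContainsPrism G ∧ ¬ContainsPyramid G ∧ ¬ContainsButterfly G ∧
  ∀ (n : ℕ) (f : ZMod n → V) (u v : V), Is2WheelCfg G n f u v → ¬G.Adj u v →
    (NestedCfg G n f u v ∨ CousinCfg G n f u v)

/-- `G` contains `S_{k,k,k}` as an induced subgraph: a root `r` and three legs of `k` edges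
each, with no other adjacencies among these vertices. -/
def ContainsSpider (G : SimpleGraph V) (k : ℕ) : Prop :=
  ∃ (r : V) (f : Fin 3 → Fin k → V),
    (∀ (j : Fin 3) (m : Fin k), f j m ≠ r) ∧
    (∀ (j₁ : Fin 3) (m₁ : Fin k) (j₂ : Fin 3) (m₂ : Fin k),
      f j₁ m₁ = f j₂ m₂ → j₁ = j₂ ∧ m₁ = m₂) ∧
    (∀ (j : Fin 3) (m : Fin k), G.Adj r (f j m) ↔ (m : ℕ) = 0) ∧
    (∀ (j₁ : Fin 3) (m₁ : Fin k) (j₂ : Fin 3) (m₂ : Fin k),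
      G.Adj (f j₁ m₁) (f j₂ m₂) ↔
        (j₁ = j₂ ∧ ((m₁ : ℕ) + 1 = (m₂ : ℕ) ∨ (m₂ : ℕ) + 1 = (m₁ : ℕ))))

/-- A `k`-span-wheel in `G`: a hole `f` of length `n`, with `x = f 0` and `y = f p`
non-adjacent, the two paths `P_A = f 0, f 1, …, f p` and `P_B = f 0, f (n-1), …, f p`,
and centers `c 0, …, c (k-1)` outside the hole such that `{c i} ∪ {x,y}` is independent,
every center has at least three neighbors on the hole and neighbors in the interiors of
both `P_A` and `P_B`, and the neighbors of the centers appear along both `P_A` and `P_B`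
(from `x` to `y`) in the order of the centers. -/
def IsSpanWheel (G : SimpleGraph V) (k n p : ℕ) (f : ZMod n → V) (c : Fin k → V) : Prop :=
  IsHoleEmb G n f ∧
  2 ≤ p ∧ p ≤ n - 2 ∧
  ¬G.Adj (f 0) (f (p : ZMod n)) ∧
  Function.Injective c ∧
  (∀ i : Fin k, c i ∉ Set.range f) ∧
  (∀ i j : Fin k, i ≠ j → ¬G.Adj (c i) (c j)) ∧
  (∀ i : Fin k, ¬G.Adj (c i) (f 0)) ∧
  (∀ i : Fin k, ¬G.Adj (c i) (f (p : ZMod n))) ∧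
  (∀ i : Fin k, 3 ≤ {m : ZMod n | G.Adj (c i) (f m)}.ncard) ∧
  (∀ i : Fin k, ∃ a : ℕ, 0 < a ∧ a < p ∧ G.Adj (c i) (f (a : ZMod n))) ∧
  (∀ i : Fin k, ∃ b : ℕ, p < b ∧ b < n ∧ G.Adj (c i) (f (b : ZMod n))) ∧
  (∀ i j : Fin k, i < j → ∀ a₁ a₂ : ℕ, a₁ ≤ p → a₂ ≤ p →
    G.Adj (c i) (f (a₁ : ZMod n)) → G.Adj (c j) (f (a₂ : ZMod n)) → a₁ ≤ a₂) ∧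
  (∀ i j : Fin k, i < j → ∀ b₁ b₂ : ℕ, p ≤ b₁ → b₁ ≤ n → p ≤ b₂ → b₂ ≤ n →
    G.Adj (c i) (f (b₁ : ZMod n)) → G.Adj (c j) (f (b₂ : ZMod n)) → b₂ ≤ b₁)

/-- `X` separates `s` from `t` in `G`: neither is in `X` and every walk from `s` to `t`
meets `X`. -/
def Separates (G : SimpleGraph V) (X : Set V) (s t : V) : Prop :=
  s ∉ X ∧ t ∉ X ∧ ∀ p : G.Walk s t, ∃ w ∈ p.support, w ∈ X

/-- `X` is a minimal separator of `G`: for some pair `s, t` it is an inclusion-wise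
minimal `st`-separator. -/
def MinSeparator (G : SimpleGraph V) (X : Set V) : Prop :=
  ∃ s t : V, Separates G X s t ∧ ∀ Y ⊆ X, Separates G Y s t → Y = X

/-- `A` is a connected component of `G ∖ C` that is full to `C`. -/
def IsFullComponent (G : SimpleGraph V) (C A : Set V) : Prop :=
  A.Nonempty ∧ Disjoint A C ∧ (G.induce A).Connected ∧
  (∀ a ∈ A, ∀ w : V, G.Adj a w → w ∈ A ∪ C) ∧
  (∀ x ∈ C, ∃ a ∈ A, G.Adj x a)

/-- A tree decomposition of `G` with tree `T` and bags `B`. -/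
def IsTreeDecomp (G : SimpleGraph V) {ι : Type} (T : SimpleGraph ι) (B : ι → Finset V) : Prop :=
  T.IsTree ∧
  (∀ v : V, ∃ i, v ∈ B i) ∧
  (∀ u v : V, G.Adj u v → ∃ i, u ∈ B i ∧ v ∈ B i) ∧
  (∀ (v : V) (i j : ι), v ∈ B i → v ∈ B j →
    ∀ (p : T.Walk i j), p.IsPath → ∀ x ∈ p.support, v ∈ B x)

/-- The treewidth of a finite graph: the least `w` such that `G` has a tree decomposition
all of whose bags have size at most `w + 1`. -/
noncomputable def treewidth (G : SimpleGraph V) : ℕ :=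
  sInf {w : ℕ | ∃ (m : ℕ) (T : SimpleGraph (Fin m)) (B : Fin m → Finset V),
    IsTreeDecomp G T B ∧ ∀ i, (B i).card ≤ w + 1}

/-- A graph is chordal iff it has no hole. -/
def IsChordal (G : SimpleGraph V) : Prop :=
  ¬∃ (n : ℕ) (f : ZMod n → V), IsHoleEmb G n f

/-- `H` is obtained from `G` by a minimal fill-in (minimal chordal completion). -/
def IsMinimalChordalCompletion (G H : SimpleGraph V) : Prop :=
  G ≤ H ∧ IsChordal H ∧ ∀ H' : SimpleGraph V, G ≤ H' → H' ≤ H → IsChordal H' → H' = H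

/-- `Ω` is a potential maximal clique of `G`: a maximal clique of some minimal chordal
completion of `G`. -/
def IsPMC (G : SimpleGraph V) (Ω : Set V) : Prop :=
  ∃ H : SimpleGraph V, IsMinimalChordalCompletion G H ∧ H.IsClique Ω ∧
    ∀ Ω' : Set V, H.IsClique Ω' → Ω ⊆ Ω' → Ω' = Ω

/-- `n` satisfies the Ramsey property for `(t, k)`: every graph on `n` vertices has a
clique of size `t` or an independent set of size `k`. -/
def RamseyProp (n t k : ℕ) : Prop :=
  ∀ G : SimpleGraph (Fin n),
    (∃ S : Finset (Fin n), G.IsNClique t S) ∨ (∃ S : Finset (Fin n), Gᶜ.IsNClique k S)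

/-- The Ramsey number `R(t, k)`. -/
noncomputable def ramseyNumber (t k : ℕ) : ℕ := sInf {n : ℕ | RamseyProp n t k}

set_option linter.unusedSectionVars false

/-! ## Building thetas from walks -/

/-- There is a walk from `a` to `b` inside `S`. -/
def LinkedIn (G : SimpleGraph V) (S : Set V) (a b : V) : Prop :=
  ∃ p : G.Walk a b, ∀ x ∈ p.support, x ∈ S

theorem LinkedIn.symm {G : SimpleGraph V} {S : Set V} {a b : V} (h : LinkedIn G S a b) :
    LinkedIn G S b a := by
  obtain ⟨p, hp⟩ := h
  exact ⟨p.reverse, fun x hx => hp x (by simpa using hx)⟩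

theorem LinkedIn.trans {G : SimpleGraph V} {S : Set V} {a b c : V} (h : LinkedIn G S a b)
    (h' : LinkedIn G S b c) : LinkedIn G S a c := by
  obtain ⟨p, hp⟩ := h
  obtain ⟨q, hq⟩ := h'
  refine ⟨p.append q, fun x hx => ?_⟩
  rw [Walk.mem_support_append_iff] at hx
  exact hx.elim (hp x) (hq x)

theorem LinkedIn.of_adj {G : SimpleGraph V} {S : Set V} {a b : V} (h : G.Adj a b)
    (ha : a ∈ S) (hb : b ∈ S) : LinkedIn G S a b := by
  refine ⟨h.toWalk, fun x hx => ?_⟩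
  simp at hx
  rcases hx with rfl | rfl <;> assumption

theorem LinkedIn.arc {G : SimpleGraph V} {S : Set V} (g : ℕ → V) (j k : ℕ) (hjk : j ≤ k)
    (hadj : ∀ t, j ≤ t → t < k → G.Adj (g t) (g (t + 1)))
    (hS : ∀ t, j ≤ t → t ≤ k → g t ∈ S) : LinkedIn G S (g j) (g k) := by
  induction k, hjk using Nat.le_induction with
  | base => exact ⟨Walk.nil, fun x hx => by simp at hx; subst hx; exact hS j le_rfl le_rfl⟩
  | succ k hk ih =>
    refine (ih (fun t h1 h2 => hadj t h1 (by omega)) (fun t h1 h2 => hS t h1 (by omega))).trans ?_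
    exact LinkedIn.of_adj (hadj k hk (by omega)) (hS k hk (by omega)) (hS _ (by omega) le_rfl)

theorem LinkedIn.exists_induced {G : SimpleGraph V} {S : Set V} {a b : V}
    (h : LinkedIn G S a b) :
    ∃ p : G.Walk a b, IsInducedPathW G p ∧ ∀ x ∈ p.support, x ∈ S := by
  classical
  have hex : ∃ l : ℕ, ∃ p : G.Walk a b, (∀ x ∈ p.support, x ∈ S) ∧ p.length = l := by
    obtain ⟨p, hp⟩ := h
    exact ⟨p.length, p, hp, rfl⟩
  obtain ⟨p, hpS, hpl⟩ := Nat.find_spec hex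
  have hmin : ∀ q : G.Walk a b, (∀ x ∈ q.support, x ∈ S) → p.length ≤ q.length := by
    intro q hq
    rw [hpl]
    exact Nat.find_min' hex ⟨q, hq, rfl⟩
  have hpath : p.IsPath := by
    have h1 := hmin p.bypass (fun x hx => hpS x (p.support_bypass_subset_support hx))
    have h2 := p.bypass_eq_self_of_length_le_length_bypass h1
    rw [← h2]
    exact p.bypass_isPath
  have key : ∀ i j : ℕ, i < j → j ≤ p.length → G.Adj (p.getVert i) (p.getVert j) →
      p.toSubgraph.Adj (p.getVert i) (p.getVert j) := by
    intro i j hij hj hadj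
    have hle := hmin ((p.take i).append (Walk.cons hadj (p.drop j))) (by
      intro x hx
      rw [Walk.mem_support_append_iff] at hx
      rcases hx with hx | hx
      · exact hpS x ((p.isSubwalk_take i).support_subset hx)
      · rw [Walk.support_cons, List.mem_cons] at hx
        rcases hx with rfl | hx
        · exact hpS _ (p.getVert_mem_support i)
        · exact hpS x ((p.isSubwalk_drop j).support_subset hx))
    simp [Walk.length_append, Walk.take_length, Walk.drop_length] at hle
    have : j = i + 1 := by omega
    subst this
    exact p.toSubgraph_adj_getVert (by omega)
  refine ⟨p, ⟨hpath, ?_⟩, hpS⟩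
  intro x y hx hy hxy
  obtain ⟨i, rfl, hi⟩ := Walk.mem_support_iff_exists_getVert.mp hx
  obtain ⟨j, rfl, hj⟩ := Walk.mem_support_iff_exists_getVert.mp hy
  rcases lt_trichotomy i j with hij | hij | hij
  · exact key i j hij hj hxy
  · subst hij
    exact (G.irrefl hxy).elim
  · exact (key j i hij hi hxy.symm).symm

/-- Two sets are separated apart from the vertices `a` and `b`. -/
def ApartOff (G : SimpleGraph V) (a b : V) (S T : Set V) : Prop :=
  ∀ x ∈ S, ∀ y ∈ T, x ≠ a → x ≠ b → y ≠ a → y ≠ b → x ≠ y ∧ ¬G.Adj x y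

theorem theta_of_linked {G : SimpleGraph V} {a b : V} (hne : a ≠ b) (hnadj : ¬G.Adj a b)
    {S T R : Set V} (hS : LinkedIn G S a b) (hT : LinkedIn G T a b) (hR : LinkedIn G R a b)
    (hST : ApartOff G a b S T) (hSR : ApartOff G a b S R) (hTR : ApartOff G a b T R) :
    ContainsTheta G := by
  obtain ⟨p, hp, hpS⟩ := hS.exists_induced
  obtain ⟨q, hq, hqT⟩ := hT.exists_induced
  obtain ⟨r, hr, hrR⟩ := hR.exists_induced
  have hlen : ∀ w : G.Walk a b, 2 ≤ w.length := by
    intro w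
    by_contra hlt
    have h0 : w.length = 0 ∨ w.length = 1 := by omega
    rcases h0 with h0 | h0
    · exact hne (Walk.eq_of_length_eq_zero h0)
    · exact hnadj (Walk.adj_of_length_eq_one h0)
  refine ⟨a, b, p, q, r, ⟨hp, hq, hr⟩, ⟨hlen p, hlen q, hlen r⟩, ?_, ?_⟩
  · intro w hw
    by_contra hcon
    push Not at hcon
    obtain ⟨h1, h2⟩ := hcon
    rcases hw with ⟨ha, hb⟩ | ⟨ha, hb⟩ | ⟨ha, hb⟩
    · exact (hST w (hpS w ha) w (hqT w hb) h1 h2 h1 h2).1 rfl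
    · exact (hSR w (hpS w ha) w (hrR w hb) h1 h2 h1 h2).1 rfl
    · exact (hTR w (hqT w ha) w (hrR w hb) h1 h2 h1 h2).1 rfl
  · intro x y h1 h2 h3 h4 hw
    rcases hw with ⟨ha, hb⟩ | ⟨ha, hb⟩ | ⟨ha, hb⟩
    · exact (hST x (hpS x ha) y (hqT y hb) h1 h2 h3 h4).2
    · exact (hSR x (hpS x ha) y (hrR y hb) h1 h2 h3 h4).2
    · exact (hTR x (hqT x ha) y (hrR y hb) h1 h2 h3 h4).2

/-! ## The rim read off from a base point -/

/-- The hole as a sequence `g 0, …, g (n-1)`. -/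
structure Rim (G : SimpleGraph V) (n : ℕ) (g : ℕ → V) : Prop where
  inj : ∀ a b, a < n → b < n → g a = g b → a = b
  adj : ∀ a b, a < n → b < n →
    (G.Adj (g a) (g b) ↔ (b = a + 1 ∨ a = b + 1 ∨ (a = 0 ∧ b + 1 = n) ∨ (b = 0 ∧ a + 1 = n)))

/-- The extra vertices `x`, `y` together with the stretch `g j, …, g k` of the rim. -/
def Stretch (g : ℕ → V) (x y : V) (j k : ℕ) : Set V :=
  {z | z = x ∨ z = y ∨ ∃ t, j ≤ t ∧ t ≤ k ∧ z = g t}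

theorem Stretch.left {g : ℕ → V} {x y : V} {j k : ℕ} : x ∈ Stretch g x y j k := Or.inl rfl
theorem Stretch.right {g : ℕ → V} {x y : V} {j k : ℕ} : y ∈ Stretch g x y j k := Or.inr (Or.inl rfl)
theorem Stretch.mid {g : ℕ → V} {x y : V} {j k t : ℕ} (h1 : j ≤ t) (h2 : t ≤ k) :
    g t ∈ Stretch g x y j k := Or.inr (Or.inr ⟨t, h1, h2, rfl⟩)

theorem Rim.linked {G : SimpleGraph V} {n : ℕ} {g : ℕ → V} (hg : Rim G n g) {x y : V}
    {j k a b : ℕ} (hja : j ≤ a) (hab : a ≤ b) (hbk : b ≤ k) (hb : b < n) :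
    LinkedIn G (Stretch g x y j k) (g a) (g b) := by
  refine LinkedIn.arc g a b hab ?_ ?_
  · intro t h1 h2
    exact (hg.adj t (t + 1) (by omega) (by omega)).2 (Or.inl rfl)
  · intro t h1 h2
    exact Stretch.mid (by omega) (by omega)

theorem Rim.tri {G : SimpleGraph V} (hTri : ∀ x y z, G.Adj x y → G.Adj y z → G.Adj x z → False)
    {n : ℕ} {g : ℕ → V} (hg : Rim G n g) {u : V} {a b : ℕ}
    (hb : a + 1 < n) (h1 : G.Adj u (g a)) (h2 : G.Adj u (g b)) (hab : b = a + 1) : False := by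
  subst hab
  exact hTri u (g a) (g (a + 1)) h1 ((hg.adj a (a + 1) (by omega) hb).2 (Or.inl rfl)) h2

theorem Rim.tri_last {G : SimpleGraph V}
    (hTri : ∀ x y z, G.Adj x y → G.Adj y z → G.Adj x z → False)
    {n : ℕ} {g : ℕ → V} (hg : Rim G n g) {u : V} {b : ℕ}
    (h1 : G.Adj u (g 0)) (h2 : G.Adj u (g b)) (hab : b + 1 = n) : False :=
  hTri u (g 0) (g b) h1 ((hg.adj 0 b (by omega) (by omega)).2 (by omega)) h2

/-- Two neighbours of `v` inside a `u`-sector and one strictly away from it. -/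
theorem theta_far {G : SimpleGraph V} {n : ℕ} {g : ℕ → V} (hg : Rim G n g) {u v : V}
    (huv : ¬G.Adj u v) (hne : u ≠ v)
    {s x y c w : ℕ} (hxy : x + 2 ≤ y) (hys : y ≤ s) (hc : s + 2 ≤ c) (hcn : c + 2 ≤ n)
    (hw : s + 2 ≤ w) (hwn : w + 2 ≤ n)
    (u0 : G.Adj u (g 0)) (us : G.Adj u (g s)) (uc : G.Adj u (g c))
    (vx : G.Adj v (g x)) (vy : G.Adj v (g y)) (vw : G.Adj v (g w)) : ContainsTheta G := by
  have h1 : LinkedIn G (Stretch g u v 0 x) u v :=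
    ((LinkedIn.of_adj u0 Stretch.left (Stretch.mid le_rfl (by omega))).trans
      (hg.linked (by omega) (Nat.zero_le x) le_rfl (by omega))).trans
      (LinkedIn.of_adj vx.symm (Stretch.mid (by omega) (by omega)) Stretch.right)
  have h2 : LinkedIn G (Stretch g u v y s) u v :=
    ((LinkedIn.of_adj us Stretch.left (Stretch.mid hys (by omega))).trans
      (hg.linked (by omega) hys le_rfl (by omega)).symm).trans
      (LinkedIn.of_adj vy.symm (Stretch.mid (by omega) (by omega)) Stretch.right)
  have h3 : LinkedIn G (Stretch g u v (s + 2) (n - 2)) u v := by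
    refine ((LinkedIn.of_adj uc Stretch.left (Stretch.mid (by omega) (by omega))).trans ?_).trans
      (LinkedIn.of_adj vw.symm (Stretch.mid (by omega) (by omega)) Stretch.right)
    rcases le_total c w with h | h
    · exact hg.linked (by omega) h (by omega) (by omega)
    · exact (hg.linked (by omega) h (by omega) (by omega)).symm
  have apart : ∀ j k j' k', k + 2 ≤ j' → k' < n → (0 < j ∨ k' + 1 < n) →
      ApartOff G u v (Stretch g u v j k) (Stretch g u v j' k') := by
    rintro j k j' k' h1 h2 h3 p (rfl | rfl | ⟨t, ht, ht', rfl⟩) q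
      (rfl | rfl | ⟨r, hr, hr', rfl⟩) a1 a2 a3 a4 <;> try contradiction
    refine ⟨fun h => ?_, fun h => ?_⟩
    · have := hg.inj _ _ (by omega) (by omega) h
      omega
    · have := (hg.adj _ _ (by omega) (by omega)).1 h
      omega
  exact theta_of_linked hne huv h1 h2 h3 (apart _ _ _ _ hxy (by omega) (by omega))
    (apart _ _ _ _ (by omega) (by omega) (by omega))
    (apart _ _ _ _ (by omega) (by omega) (by omega))

/-- `v` has a neighbour right after the end of a `u`-sector. -/
theorem theta_after {G : SimpleGraph V}
    (hTri : ∀ x y z, G.Adj x y → G.Adj y z → G.Adj x z → False)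
    {n : ℕ} {g : ℕ → V} (hg : Rim G n g) {u v : V}
    (huv : ¬G.Adj u v) (hu : ∀ t, g t ≠ u) (hv : ∀ t, g t ≠ v)
    {s x c : ℕ} (hxs : x + 2 ≤ s) (hc : s + 2 ≤ c) (hcn : c + 2 ≤ n)
    (hfar : ∀ w, s + 2 ≤ w → w + 2 ≤ n → ¬G.Adj v (g w))
    (u0 : G.Adj u (g 0)) (us : G.Adj u (g s)) (uc : G.Adj u (g c))
    (vx : G.Adj v (g x)) (vs : G.Adj v (g (s + 1))) : ContainsTheta G := by
  have hvs : ¬G.Adj v (g s) := fun h => hg.tri hTri (by omega) h vs rfl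
  have hus : ¬G.Adj u (g (s + 1)) := fun h => hg.tri hTri (by omega) us h rfl
  have h1 : LinkedIn G (Stretch g u u s (s + 1)) (g (s + 1)) u :=
    (hg.linked le_rfl (Nat.le_succ s) le_rfl (by omega)).symm.trans
      (LinkedIn.of_adj us.symm (Stretch.mid le_rfl (by omega)) Stretch.left)
  have h2 : LinkedIn G (Stretch g u u (s + 1) c) (g (s + 1)) u :=
    (hg.linked le_rfl (by omega) le_rfl (by omega)).trans
      (LinkedIn.of_adj uc.symm (Stretch.mid (by omega) (by omega)) Stretch.left)
  have h3 : LinkedIn G ({g (s + 1)} ∪ Stretch g u v 0 x) (g (s + 1)) u := by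
    refine (LinkedIn.of_adj vs.symm (Or.inl rfl) (Or.inr Stretch.right)).trans ?_
    refine (LinkedIn.of_adj vx (Or.inr Stretch.right) (Or.inr (Stretch.mid (by omega) le_rfl))).trans ?_
    obtain ⟨p, hp⟩ := (hg.linked (x := u) (y := v) (le_refl 0) (Nat.zero_le x) le_rfl
      (by omega)).symm.trans (LinkedIn.of_adj u0.symm (Stretch.mid le_rfl (by omega)) Stretch.left)
    exact ⟨p, fun z hz => Or.inr (hp z hz)⟩
  refine theta_of_linked (hu _) (fun h => hus h.symm) h1 h2 h3 ?_ ?_ ?_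
  · rintro p (rfl | rfl | ⟨t, ht, ht', rfl⟩) q (rfl | rfl | ⟨r, hr, hr', rfl⟩) a1 a2 a3 a4 <;>
      try contradiction
    have e1 : t ≠ s + 1 := by rintro rfl; exact a1 rfl
    have e2 : r ≠ s + 1 := by rintro rfl; exact a3 rfl
    refine ⟨fun h => ?_, fun h => ?_⟩
    · have := hg.inj _ _ (by omega) (by omega) h
      omega
    · have := (hg.adj _ _ (by omega) (by omega)).1 h
      omega
  · rintro p (rfl | rfl | ⟨t, ht, ht', rfl⟩) q (rfl | rfl | rfl | ⟨r, hr, hr', rfl⟩) a1 a2 a3 a4 <;>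
      try contradiction
    · have e1 : t = s := by
        by_contra hh
        exact a1 (by congr 1; omega)
      subst e1
      exact ⟨hv _, fun h => hvs h.symm⟩
    · have e1 : t = s := by
        by_contra hh
        exact a1 (by congr 1; omega)
      subst e1
      refine ⟨fun h => ?_, fun h => ?_⟩
      · have := hg.inj _ _ (by omega) (by omega) h
        omega
      · have := (hg.adj _ _ (by omega) (by omega)).1 h
        omega
  · rintro p (rfl | rfl | ⟨t, ht, ht', rfl⟩) q (rfl | rfl | rfl | ⟨r, hr, hr', rfl⟩) a1 a2 a3 a4 <;>
      try contradiction
    · have e1 : t ≠ s + 1 := by rintro rfl; exact a1 rfl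
      exact ⟨hv _, fun h => hfar t (by omega) (by omega) h.symm⟩
    · have e1 : t ≠ s + 1 := by rintro rfl; exact a1 rfl
      refine ⟨fun h => ?_, fun h => ?_⟩
      · have := hg.inj _ _ (by omega) (by omega) h
        omega
      · have := (hg.adj _ _ (by omega) (by omega)).1 h
        omega

/-- `v` has a neighbour right before the start of a `u`-sector. -/
theorem theta_before {G : SimpleGraph V}
    (hTri : ∀ x y z, G.Adj x y → G.Adj y z → G.Adj x z → False)
    {n : ℕ} {g : ℕ → V} (hg : Rim G n g) {u v : V}
    (huv : ¬G.Adj u v) (hu : ∀ t, g t ≠ u) (hv : ∀ t, g t ≠ v)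
    {s y c m : ℕ} (hy : 2 ≤ y) (hys : y ≤ s) (hc : s + 2 ≤ c) (hcn : c + 2 ≤ n) (hm : m + 1 = n)
    (hfar : ∀ w, s + 2 ≤ w → w + 2 ≤ n → ¬G.Adj v (g w))
    (u0 : G.Adj u (g 0)) (us : G.Adj u (g s)) (uc : G.Adj u (g c))
    (vy : G.Adj v (g y)) (vm : G.Adj v (g m)) : ContainsTheta G := by
  have hv0 : ¬G.Adj v (g 0) := fun h => hg.tri_last hTri h vm hm
  have hum : ¬G.Adj u (g m) := fun h => hg.tri_last hTri u0 h hm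
  have h0m : G.Adj (g m) (g 0) := (hg.adj _ _ (by omega) (by omega)).2 (by omega)
  have h1 : LinkedIn G (Stretch g u (g m) 0 0) (g m) u :=
    (LinkedIn.of_adj h0m Stretch.right (Stretch.mid le_rfl le_rfl)).trans
      (LinkedIn.of_adj u0.symm (Stretch.mid le_rfl (by omega)) Stretch.left)
  have h2 : LinkedIn G (Stretch g u u c m) (g m) u :=
    (hg.linked le_rfl (by omega) le_rfl (by omega)).symm.trans
      (LinkedIn.of_adj uc.symm (Stretch.mid (by omega) (by omega)) Stretch.left)
  have h3 : LinkedIn G ({g m} ∪ Stretch g u v y s) (g m) u := by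
    refine (LinkedIn.of_adj vm.symm (Or.inl rfl) (Or.inr Stretch.right)).trans ?_
    refine (LinkedIn.of_adj vy (Or.inr Stretch.right) (Or.inr (Stretch.mid le_rfl hys))).trans ?_
    obtain ⟨p, hp⟩ := (hg.linked (x := u) (y := v) (le_refl y) hys le_rfl
      (by omega)).trans (LinkedIn.of_adj us.symm (Stretch.mid hys (by omega)) Stretch.left)
    exact ⟨p, fun z hz => Or.inr (hp z hz)⟩
  refine theta_of_linked (hu _) (fun h => hum h.symm) h1 h2 h3 ?_ ?_ ?_
  · rintro p (rfl | rfl | ⟨t, ht, ht', rfl⟩) q (rfl | rfl | ⟨r, hr, hr', rfl⟩) a1 a2 a3 a4 <;>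
      try contradiction
    have e2 : r ≠ m := by rintro rfl; exact a3 rfl
    refine ⟨fun h => ?_, fun h => ?_⟩
    · have := hg.inj _ _ (by omega) (by omega) h
      omega
    · have := (hg.adj _ _ (by omega) (by omega)).1 h
      omega
  · rintro p (rfl | rfl | ⟨t, ht, ht', rfl⟩) q (rfl | rfl | rfl | ⟨r, hr, hr', rfl⟩) a1 a2 a3 a4 <;>
      try contradiction
    · have e1 : t = 0 := by omega
      subst e1
      exact ⟨hv _, fun h => hv0 h.symm⟩
    · refine ⟨fun h => ?_, fun h => ?_⟩
      · have := hg.inj _ _ (by omega) (by omega) h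
        omega
      · have := (hg.adj _ _ (by omega) (by omega)).1 h
        omega
  · rintro p (rfl | rfl | ⟨t, ht, ht', rfl⟩) q (rfl | rfl | rfl | ⟨r, hr, hr', rfl⟩) a1 a2 a3 a4 <;>
      try contradiction
    · have e1 : t ≠ m := by rintro rfl; exact a1 rfl
      exact ⟨hv _, fun h => hfar t (by omega) (by omega) h.symm⟩
    · have e1 : t ≠ m := by rintro rfl; exact a1 rfl
      refine ⟨fun h => ?_, fun h => ?_⟩
      · have := hg.inj _ _ (by omega) (by omega) h
        omega
      · have := (hg.adj _ _ (by omega) (by omega)).1 h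
        omega

/-- If `v` has two neighbours in a closed `u`-sector, it has none outside of it. -/
theorem sector_two {G : SimpleGraph V} (hTheta : ¬ContainsTheta G)
    (hTri : ∀ x y z, G.Adj x y → G.Adj y z → G.Adj x z → False)
    {n : ℕ} {g : ℕ → V} (hg : Rim G n g) {u v : V}
    (huv : ¬G.Adj u v) (hne : u ≠ v) (hu : ∀ t, g t ≠ u) (hv : ∀ t, g t ≠ v)
    {s x y c w : ℕ} (hxy : x < y) (hys : y ≤ s) (hc : s < c) (hcn : c < n)
    (u0 : G.Adj u (g 0)) (us : G.Adj u (g s)) (uc : G.Adj u (g c))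
    (vx : G.Adj v (g x)) (vy : G.Adj v (g y)) (hw : s < w) (hwn : w < n) : ¬G.Adj v (g w) := by
  have c1 : c ≠ s + 1 := fun h => hg.tri hTri (by omega) us uc h
  have c2 : c + 1 ≠ n := fun h => hg.tri_last hTri u0 uc h
  have y1 : y ≠ x + 1 := fun h => hg.tri hTri (by omega) vx vy h
  have far : ∀ w, s + 2 ≤ w → w + 2 ≤ n → ¬G.Adj v (g w) := fun w h1 h2 vw =>
    hTheta (theta_far hg huv hne (by omega : x + 2 ≤ y) hys (by omega) (by omega) h1 h2
      u0 us uc vx vy vw)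
  intro vw
  by_cases h1 : w = s + 1
  · subst h1
    exact hTheta (theta_after hTri hg huv hu hv (by omega : x + 2 ≤ s) (by omega) (by omega) far
      u0 us uc vx vw)
  by_cases h2 : w + 1 = n
  · exact hTheta (theta_before hTri hg huv hu hv (by omega : 2 ≤ y) hys (by omega) (by omega) h2 far
      u0 us uc vy vw)
  exact far w (by omega) (by omega) vw

/-- Four alternating neighbours `u, v, u, v` with a long middle arc. -/
theorem theta_middle {G : SimpleGraph V}
    {n : ℕ} {g : ℕ → V} (hg : Rim G n g) {u v : V}
    (huv : ¬G.Adj u v) (hne : u ≠ v) (hu : ∀ t, g t ≠ u) (hv : ∀ t, g t ≠ v)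
    {p q r : ℕ} (hpq : p + 2 ≤ q) (hqr : q < r) (hr : r + 2 ≤ n)
    (hua : ∀ t, 0 < t → t ≤ r → t ≠ q → ¬G.Adj u (g t))
    (hva : ∀ t, t ≤ q → t ≠ p → ¬G.Adj v (g t))
    (u0 : G.Adj u (g 0)) (uq : G.Adj u (g q))
    (vp : G.Adj v (g p)) (vr : G.Adj v (g r)) : ContainsTheta G := by
  have h1 : LinkedIn G (Stretch g (g p) (g p) p q) (g p) (g q) :=
    hg.linked le_rfl (by omega) le_rfl (by omega)
  have h2 : LinkedIn G (Stretch g (g p) v q r) (g p) (g q) :=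
    ((LinkedIn.of_adj vp.symm Stretch.left Stretch.right).trans
      (LinkedIn.of_adj vr Stretch.right (Stretch.mid (by omega) le_rfl))).trans
      (hg.linked le_rfl (by omega) le_rfl (by omega)).symm
  have h3 : LinkedIn G (Stretch g (g q) u 0 p) (g p) (g q) :=
    ((hg.linked le_rfl (by omega) le_rfl (by omega)).symm.trans
      (LinkedIn.of_adj u0.symm (Stretch.mid le_rfl (by omega)) Stretch.right)).trans
      (LinkedIn.of_adj uq Stretch.right Stretch.left)
  have hnadj : ¬G.Adj (g p) (g q) := fun h => by
    have := (hg.adj _ _ (by omega) (by omega)).1 h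
    omega
  have hneq : g p ≠ g q := fun h => by
    have := hg.inj _ _ (by omega) (by omega) h
    omega
  have idx : ∀ t s, g t ≠ g s → t ≠ s := fun t s h e => h (by rw [e])
  refine theta_of_linked hneq hnadj h1 h2 h3 ?_ ?_ ?_
  · rintro x (rfl | rfl | ⟨t, ht, ht', rfl⟩) y (rfl | rfl | ⟨k, hk, hk', rfl⟩) a1 a2 a3 a4 <;>
      try contradiction
    · exact ⟨hv _, fun h => hva t ht' (idx _ _ a1) h.symm⟩
    · have e1 := idx _ _ a1
      have e2 := idx _ _ a2
      have e3 := idx _ _ a3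
      have e4 := idx _ _ a4
      refine ⟨fun h => ?_, fun h => ?_⟩
      · have := hg.inj _ _ (by omega) (by omega) h
        omega
      · have := (hg.adj _ _ (by omega) (by omega)).1 h
        omega
  · rintro x (rfl | rfl | ⟨t, ht, ht', rfl⟩) y (rfl | rfl | ⟨k, hk, hk', rfl⟩) a1 a2 a3 a4 <;>
      try contradiction
    · have e1 := idx _ _ a1
      exact ⟨hu _, fun h => hua t (by omega) (by omega) (idx _ _ a2) h.symm⟩
    · have e1 := idx _ _ a1
      have e2 := idx _ _ a2
      have e3 := idx _ _ a3
      have e4 := idx _ _ a4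
      refine ⟨fun h => ?_, fun h => ?_⟩
      · have := hg.inj _ _ (by omega) (by omega) h
        omega
      · have := (hg.adj _ _ (by omega) (by omega)).1 h
        omega
  · rintro x (rfl | rfl | ⟨t, ht, ht', rfl⟩) y (rfl | rfl | ⟨k, hk, hk', rfl⟩) a1 a2 a3 a4 <;>
      try contradiction
    · exact ⟨hne.symm, fun h => huv h.symm⟩
    · exact ⟨(hv _).symm, fun h => hva k (by omega) (idx _ _ a3) h⟩
    · exact ⟨hu _, fun h => hua t (by omega) (by omega) (idx _ _ a2) h.symm⟩
    · have e1 := idx _ _ a1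
      have e2 := idx _ _ a2
      have e3 := idx _ _ a3
      have e4 := idx _ _ a4
      refine ⟨fun h => ?_, fun h => ?_⟩
      · have := hg.inj _ _ (by omega) (by omega) h
        omega
      · have := (hg.adj _ _ (by omega) (by omega)).1 h
        omega

/-- The alternating situation on a rim of length at least 8. -/
theorem theta_long {G : SimpleGraph V}
    {n : ℕ} {g : ℕ → V} (hg : Rim G n g) {u v : V}
    (huv : ¬G.Adj u v) (hu : ∀ t, g t ≠ u) (hv : ∀ t, g t ≠ v)
    (hn : 7 ≤ n) (u0 : G.Adj u (g 0)) (u1 : ¬G.Adj u (g 1)) (u2 : G.Adj u (g 2))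
    (u4 : G.Adj u (g 4)) (v0 : ¬G.Adj v (g 0)) (v1 : G.Adj v (g 1)) (v2 : ¬G.Adj v (g 2))
    (v5 : G.Adj v (g 5)) : ContainsTheta G := by
  have h1 : LinkedIn G (Stretch g u u 0 1) (g 1) u :=
    (hg.linked (le_refl 0) (Nat.zero_le 1) le_rfl (by omega)).symm.trans
      (LinkedIn.of_adj u0.symm (Stretch.mid le_rfl (by omega)) Stretch.left)
  have h2 : LinkedIn G (Stretch g u u 1 2) (g 1) u :=
    (hg.linked (le_refl 1) (by omega) le_rfl (by omega)).trans
      (LinkedIn.of_adj u2.symm (Stretch.mid (by omega) (by omega)) Stretch.left)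
  have h3 : LinkedIn G ({g 1} ∪ Stretch g u v 4 5) (g 1) u := by
    refine (LinkedIn.of_adj v1.symm (Or.inl rfl) (Or.inr Stretch.right)).trans ?_
    refine (LinkedIn.of_adj v5 (Or.inr Stretch.right) (Or.inr (Stretch.mid (by omega) le_rfl))).trans ?_
    obtain ⟨p, hp⟩ := (hg.linked (x := u) (y := v) (le_refl 4) (by omega : 4 ≤ 5) le_rfl
      (by omega)).symm.trans (LinkedIn.of_adj u4.symm (Stretch.mid le_rfl (by omega)) Stretch.left)
    exact ⟨p, fun z hz => Or.inr (hp z hz)⟩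
  have idx : ∀ t s, g t ≠ g s → t ≠ s := fun t s h e => h (by rw [e])
  refine theta_of_linked (hu _) (fun h => u1 h.symm) h1 h2 h3 ?_ ?_ ?_
  · rintro p (rfl | rfl | ⟨t, ht, ht', rfl⟩) q (rfl | rfl | ⟨r, hr, hr', rfl⟩) a1 a2 a3 a4 <;>
      try contradiction
    have e1 := idx _ _ a1
    have e3 := idx _ _ a3
    refine ⟨fun h => ?_, fun h => ?_⟩
    · have := hg.inj _ _ (by omega) (by omega) h
      omega
    · have := (hg.adj _ _ (by omega) (by omega)).1 h
      omega
  · rintro p (rfl | rfl | ⟨t, ht, ht', rfl⟩) q (rfl | rfl | rfl | ⟨r, hr, hr', rfl⟩) a1 a2 a3 a4 <;>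
      try contradiction
    · have e1 := idx _ _ a1
      obtain rfl : t = 0 := by omega
      exact ⟨hv _, fun h => v0 h.symm⟩
    · have e1 := idx _ _ a1
      refine ⟨fun h => ?_, fun h => ?_⟩
      · have := hg.inj _ _ (by omega) (by omega) h
        omega
      · have := (hg.adj _ _ (by omega) (by omega)).1 h
        omega
  · rintro p (rfl | rfl | ⟨t, ht, ht', rfl⟩) q (rfl | rfl | rfl | ⟨r, hr, hr', rfl⟩) a1 a2 a3 a4 <;>
      try contradiction
    · have e1 := idx _ _ a1
      obtain rfl : t = 2 := by omega
      exact ⟨hv _, fun h => v2 h.symm⟩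
    · have e1 := idx _ _ a1
      refine ⟨fun h => ?_, fun h => ?_⟩
      · have := hg.inj _ _ (by omega) (by omega) h
        omega
      · have := (hg.adj _ _ (by omega) (by omega)).1 h
        omega

/-! ## Cyclic combinatorics -/

/-- `i` and `i + s` are consecutive elements of `A` in cyclic order. -/
structure Gap {n : ℕ} (A : ZMod n → Prop) (i : ZMod n) (s : ℕ) : Prop where
  pos : 0 < s
  fst : A i
  snd : A (i + (s : ZMod n))
  none : ∀ t : ℕ, 0 < t → t < s → ¬A (i + (t : ZMod n))

theorem zmod_fwd {n : ℕ} (hn : 0 < n) (i m : ZMod n) : ∃ t : ℕ, t < n ∧ m = i + (t : ZMod n) := by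
  have : NeZero n := ⟨by omega⟩
  refine ⟨(m - i).val, ZMod.val_lt _, ?_⟩
  rw [ZMod.natCast_zmod_val]
  ring

theorem zmod_cast_inj {n : ℕ} {a b : ℕ} (ha : a < n) (hb : b < n)
    (h : (a : ZMod n) = (b : ZMod n)) : a = b := by
  rw [ZMod.natCast_eq_natCast_iff'] at h
  rwa [Nat.mod_eq_of_lt ha, Nat.mod_eq_of_lt hb] at h

theorem exists_third {n : ℕ} {A : ZMod n → Prop} (hA : 3 ≤ {m | A m}.ncard) (i j : ZMod n) :
    ∃ m, A m ∧ m ≠ i ∧ m ≠ j := by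
  by_contra hcon
  push Not at hcon
  have hsub : {m | A m} ⊆ ({i, j} : Set (ZMod n)) := by
    intro m hm
    by_cases h : m = i
    · exact Or.inl h
    · exact Or.inr (hcon m hm h)
  have h1 := Set.ncard_le_ncard hsub (Set.toFinite _)
  have h2 := Set.ncard_insert_le i ({j} : Set (ZMod n))
  rw [Set.ncard_singleton] at h2
  omega

theorem Gap.third {n : ℕ} (hn : 0 < n) {A : ZMod n → Prop} (hA : 3 ≤ {m | A m}.ncard)
    {i : ZMod n} {s : ℕ} (h : Gap A i s) : ∃ c, s < c ∧ c < n ∧ A (i + (c : ZMod n)) := by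
  obtain ⟨m, hm, h1, h2⟩ := exists_third hA i (i + (s : ZMod n))
  obtain ⟨t, ht, rfl⟩ := zmod_fwd hn i m
  refine ⟨t, ?_, ht, hm⟩
  by_contra hcon
  have e1 : t ≠ 0 := by rintro rfl; exact h1 (by simp)
  have e2 : t ≠ s := by rintro rfl; exact h2 rfl
  exact h.none t (by omega) (by omega) hm

theorem exists_gap_after {n : ℕ} (hn : 0 < n) {A : ZMod n → Prop} {i : ZMod n} (hi : A i) :
    ∃ s, Gap A i s := by
  classical
  have hex : ∃ t : ℕ, 0 < t ∧ A (i + (t : ZMod n)) := ⟨n, hn, by simpa using hi⟩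
  refine ⟨Nat.find hex, (Nat.find_spec hex).1, hi, (Nat.find_spec hex).2, ?_⟩
  intro t h1 h2 h3
  exact Nat.find_min hex h2 ⟨h1, h3⟩

theorem exists_gap_before {n : ℕ} (hn : 0 < n) {A : ZMod n → Prop} {i : ZMod n} (hi : A i) :
    ∃ s : ℕ, Gap A (i - (s : ZMod n)) s := by
  classical
  have hex : ∃ t : ℕ, 0 < t ∧ A (i - (t : ZMod n)) := ⟨n, hn, by simpa using hi⟩
  refine ⟨Nat.find hex, (Nat.find_spec hex).1, (Nat.find_spec hex).2, by simpa using hi, ?_⟩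
  intro t h1 h2 h3
  refine Nat.find_min hex (m := Nat.find hex - t) (by omega) ⟨by omega, ?_⟩
  rw [Nat.cast_sub h2.le]
  convert h3 using 1
  ring

/-- A stretch whose interior avoids `B` lies inside a gap of `B`. -/
theorem exists_gap_around {n : ℕ} (hn : 0 < n) {B : ZMod n → Prop} {b : ZMod n} (hb : B b)
    (i : ZMod n) {s : ℕ} (hs : 0 < s) (hno : ∀ t : ℕ, 0 < t → t < s → ¬B (i + (t : ZMod n))) :
    ∃ j k : ℕ, Gap B (i - (j : ZMod n)) (j + s + k) := by
  classical
  have hex1 : ∃ j : ℕ, B (i - (j : ZMod n)) := by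
    obtain ⟨t, -, ht⟩ := zmod_fwd hn b i
    exact ⟨t, by rw [ht]; simpa using hb⟩
  have hex2 : ∃ k : ℕ, B (i + ((s + k : ℕ) : ZMod n)) := by
    obtain ⟨t, -, ht⟩ := zmod_fwd hn (i + (s : ZMod n)) b
    refine ⟨t, ?_⟩
    rw [Nat.cast_add, ← add_assoc, ← ht]
    exact hb
  refine ⟨Nat.find hex1, Nat.find hex2, by omega, Nat.find_spec hex1, ?_, ?_⟩
  · have := Nat.find_spec hex2
    convert this using 1
    push_cast
    ring
  · intro t h1 h2 h3
    by_cases hA : t ≤ Nat.find hex1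
    · refine Nat.find_min hex1 (m := Nat.find hex1 - t) (by omega) ?_
      rw [Nat.cast_sub hA]
      convert h3 using 1
      ring
    · obtain ⟨t', rfl⟩ := Nat.exists_eq_add_of_le (by omega : Nat.find hex1 ≤ t)
      have h4 : B (i + (t' : ZMod n)) := by
        convert h3 using 1
        push_cast
        ring
      by_cases hB : t' < s
      · exact hno t' (by omega) hB h4
      · obtain ⟨k, rfl⟩ := Nat.exists_eq_add_of_le (by omega : s ≤ t')
        exact Nat.find_min hex2 (m := k) (by omega) h4

/-- No closed gap of `A` contains two elements of `B`. -/
def Sparse {n : ℕ} (A B : ZMod n → Prop) : Prop :=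
  ∀ i s, Gap A i s → ∀ x y : ℕ, x < y → y ≤ s → B (i + (x : ZMod n)) → B (i + (y : ZMod n)) → False

theorem Gap.exists_between {n : ℕ} (hn : 0 < n) {A B : ZMod n → Prop} {b : ZMod n} (hb : B b)
    (hBA : Sparse B A) {i : ZMod n} {s : ℕ} (h : Gap A i s) :
    ∃ p, 0 < p ∧ p < s ∧ B (i + (p : ZMod n)) := by
  by_contra hcon
  push Not at hcon
  obtain ⟨j, k, hg⟩ := exists_gap_around hn hb i h.pos hcon
  have hpos := h.pos
  refine hBA _ _ hg j (j + s) (by omega) (by omega) ?_ ?_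
  · simpa using h.fst
  · convert h.snd using 1
    push_cast
    ring

/-! ## The wheel -/

theorem IsHoleEmb.rim {G : SimpleGraph V} {n : ℕ} {f : ZMod n → V} (h : IsHoleEmb G n f)
    (i : ZMod n) : Rim G n (fun t => f (i + (t : ZMod n))) := by
  obtain ⟨hn, hinj, hadj⟩ := h
  refine ⟨?_, ?_⟩
  · intro a b ha hb hab
    exact zmod_cast_inj ha hb (add_left_cancel (hinj hab))
  · have key : ∀ a b : ℕ, a < n → b < n →
        (i + (b : ZMod n) = i + (a : ZMod n) + 1 ↔ (b = a + 1 ∨ (b = 0 ∧ a + 1 = n))) := by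
      intro a b ha hb
      rw [add_assoc, add_right_inj]
      constructor
      · intro h
        by_cases h1 : a + 1 = n
        · refine Or.inr ⟨zmod_cast_inj hb (by omega) ?_, h1⟩
          rw [h]
          have : ((a + 1 : ℕ) : ZMod n) = 0 := by rw [h1]; simp
          simpa using this
        · exact Or.inl (zmod_cast_inj hb (by omega) (by rw [h]; simp))
      · rintro (rfl | ⟨rfl, h1⟩)
        · simp
        · have : ((a + 1 : ℕ) : ZMod n) = 0 := by rw [h1]; simp
          simpa using this.symm
    intro a b ha hb
    rw [hadj, key a b ha hb, key b a hb ha]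
    omega

theorem not_sparse_nested {G : SimpleGraph V} (hTheta : ¬ContainsTheta G)
    (hTri : ∀ x y z, G.Adj x y → G.Adj y z → G.Adj x z → False)
    {n : ℕ} {f : ZMod n → V} {u v : V} (hW : Is2WheelCfg G n f u v) (huv : ¬G.Adj u v)
    (hS : ¬Sparse (fun m => G.Adj u (f m)) (fun m => G.Adj v (f m))) :
    ∃ (i : ZMod n) (s : ℕ), 1 ≤ s ∧ s < n ∧
      (∀ m, G.Adj v (f m) → ∃ e : ℕ, e ≤ s ∧ m = i + (e : ZMod n)) ∧
      (∀ m, G.Adj u (f m) → ∃ e : ℕ, s ≤ e ∧ e ≤ n ∧ m = i + (e : ZMod n)) := by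
  obtain ⟨hH, hne, hu, hv, cu, cv⟩ := hW
  have hn : 0 < n := by have := hH.1; omega
  unfold Sparse at hS
  push Not at hS
  obtain ⟨i, s, hg, x, y, hxy, hys, vx, vy, -⟩ := hS
  obtain ⟨c, hc, hcn, uc⟩ := hg.third hn cu
  refine ⟨i, s, hg.pos, by omega, ?_, ?_⟩
  · intro m hm
    obtain ⟨t, ht, rfl⟩ := zmod_fwd hn i m
    refine ⟨t, ?_, rfl⟩
    by_contra hcon
    exact sector_two hTheta hTri (hH.rim i) huv hne (fun t h => hu ⟨_, h⟩) (fun t h => hv ⟨_, h⟩)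
      hxy hys hc hcn (by simpa using hg.fst) hg.snd uc vx vy (by omega) ht hm
  · intro m hm
    obtain ⟨t, ht, rfl⟩ := zmod_fwd hn i m
    by_cases h0 : t = 0
    · subst h0
      exact ⟨n, by omega, le_rfl, by simp⟩
    · refine ⟨t, ?_, ht.le, rfl⟩
      by_contra hcon
      exact hg.none t (by omega) (by omega) hm

theorem pred_of_sparse {G : SimpleGraph V} (hTheta : ¬ContainsTheta G)
    {n : ℕ} {f : ZMod n → V} {u v : V} (hW : Is2WheelCfg G n f u v) (huv : ¬G.Adj u v)
    (h1 : Sparse (fun m => G.Adj u (f m)) (fun m => G.Adj v (f m)))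
    (h2 : Sparse (fun m => G.Adj v (f m)) (fun m => G.Adj u (f m)))
    (m : ZMod n) (hm : G.Adj u (f m)) : ¬G.Adj v (f m) ∧ G.Adj v (f (m - 1)) := by
  obtain ⟨hH, hne, hu, hv, cu, cv⟩ := hW
  have hn : 0 < n := by have := hH.1; omega
  obtain ⟨b, hb, -⟩ := exists_third cv 0 0
  obtain ⟨s, hg⟩ := exists_gap_before (A := fun m => G.Adj u (f m)) hn hm
  obtain ⟨s', hg'⟩ := exists_gap_after (A := fun m => G.Adj u (f m)) hn hm
  obtain ⟨p, hp, hps, vp⟩ := hg.exists_between hn hb h2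
  obtain ⟨p', hp', hps', vp'⟩ := hg'.exists_between hn hb h2
  obtain ⟨c, hc, hcn, uc⟩ := hg.third hn cu
  set i : ZMod n := m - (s : ZMod n) with hi
  have hmi : ∀ t : ℕ, i + ((s + t : ℕ) : ZMod n) = m + (t : ZMod n) := by
    intro t
    rw [hi]
    push_cast
    ring
  have hcs : s + s' ≤ c := by
    by_contra hcon
    obtain ⟨t, rfl⟩ := Nat.exists_eq_add_of_le hc.le
    refine hg'.none t (by omega) (by omega) ?_
    rw [← hmi]
    exact uc
  have huniq : ∀ t : ℕ, t ≤ s → t ≠ p → ¬G.Adj v (f (i + (t : ZMod n))) := by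
    intro t ht htp hvt
    rcases lt_or_gt_of_ne htp with h | h
    · exact h1 i s hg t p h hps.le hvt vp
    · exact h1 i s hg p t h ht vp hvt
  have hms : i + (s : ZMod n) = m := by rw [hi]; ring
  refine ⟨?_, ?_⟩
  · have := huniq s le_rfl (by omega)
    rwa [hms] at this
  · have hps1 : p + 1 = s := by
      by_contra hcon
      refine hTheta (theta_middle (hH.rim i) huv hne (fun t h => hu ⟨_, h⟩) (fun t h => hv ⟨_, h⟩)
        (p := p) (q := s) (r := s + p') (by omega) (by omega) (by omega) ?_ huniq
        (by simpa using hg.fst) hg.snd vp (by simpa only [hmi] using vp'))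
      intro t ht0 ht hts
      by_cases hlt : t < s
      · exact hg.none t ht0 hlt
      · obtain ⟨t', rfl⟩ := Nat.exists_eq_add_of_le (by omega : s ≤ t)
        rw [hmi]
        exact hg'.none t' (by omega) (by omega)
    have : m - 1 = i + (p : ZMod n) := by
      rw [← hms, ← hps1]
      push_cast
      ring
    rw [this]
    exact vp

theorem Is2WheelCfg.swap {G : SimpleGraph V} {n : ℕ} {f : ZMod n → V} {u v : V}
    (h : Is2WheelCfg G n f u v) : Is2WheelCfg G n f v u :=
  ⟨h.1, h.2.1.symm, h.2.2.2.1, h.2.2.1, h.2.2.2.2.2, h.2.2.2.2.1⟩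

theorem cube_of_sparse {G : SimpleGraph V} (hTheta : ¬ContainsTheta G)
    {n : ℕ} {f : ZMod n → V} {u v : V} (hW : Is2WheelCfg G n f u v) (huv : ¬G.Adj u v)
    (h1 : Sparse (fun m => G.Adj u (f m)) (fun m => G.Adj v (f m)))
    (h2 : Sparse (fun m => G.Adj v (f m)) (fun m => G.Adj u (f m))) : CubeCfg G n f u v := by
  have hu := pred_of_sparse hTheta hW huv h1 h2
  have hv := pred_of_sparse hTheta hW.swap (fun h => huv h.symm) h2 h1
  obtain ⟨hH, hne, hru, hrv, cu, cv⟩ := hW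
  have hn4 := hH.1
  obtain ⟨b, hb, -⟩ := exists_third cu 0 0
  have hback : ∀ k : ℕ, G.Adj u (f (b - ((2 * k : ℕ) : ZMod n))) ∧
      G.Adj v (f (b - ((2 * k + 1 : ℕ) : ZMod n))) := by
    intro k
    induction k with
    | zero => exact ⟨by simpa using hb, by simpa using (hu b hb).2⟩
    | succ k ih =>
      have e1 := (hv _ ih.2).2
      have e2 : b - ((2 * k + 1 : ℕ) : ZMod n) - 1 = b - ((2 * (k + 1) : ℕ) : ZMod n) := by
        push_cast
        ring
      rw [e2] at e1
      have e3 := (hu _ e1).2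
      have e4 : b - ((2 * (k + 1) : ℕ) : ZMod n) - 1 = b - ((2 * (k + 1) + 1 : ℕ) : ZMod n) := by
        push_cast
        ring
      rw [e4] at e3
      exact ⟨e1, e3⟩
  -- the rim is even
  have heven : Even n := by
    by_contra hodd
    rw [Nat.not_even_iff_odd] at hodd
    obtain ⟨k, hk⟩ := hodd
    have h := (hback k).2
    rw [← hk] at h
    simp at h
    exact (hu b hb).1 h
  obtain ⟨k, hk⟩ := heven
  have hfu : ∀ t : ℕ, G.Adj u (f (b + ((2 * t : ℕ) : ZMod n))) := by
    intro t
    have h := (hback (n * t - t)).1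
    have e : b - ((2 * (n * t - t) : ℕ) : ZMod n) = b + ((2 * t : ℕ) : ZMod n) := by
      have hle : t ≤ n * t := Nat.le_mul_of_pos_left t (by omega)
      push_cast [hle]
      simp
    rwa [e] at h
  have hfv : ∀ t : ℕ, G.Adj v (f (b + ((2 * t + 1 : ℕ) : ZMod n))) := by
    intro t
    have h := (hu _ (hfu (t + 1))).2
    have e : b + ((2 * (t + 1) : ℕ) : ZMod n) - 1 = b + ((2 * t + 1 : ℕ) : ZMod n) := by
      push_cast
      ring
    rwa [e] at h
  have hnv : ∀ t : ℕ, ¬G.Adj v (f (b + ((2 * t : ℕ) : ZMod n))) := fun t => (hu _ (hfu t)).1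
  have hnu : ∀ t : ℕ, ¬G.Adj u (f (b + ((2 * t + 1 : ℕ) : ZMod n))) := fun t => (hv _ (hfv t)).1
  have hle : n < 7 := by
    by_contra hcon
    exact hTheta (theta_long (hH.rim b) huv (fun t h => hru ⟨_, h⟩) (fun t h => hrv ⟨_, h⟩)
      (by omega) (hfu 0) (hnu 0) (hfu 1) (hfu 2) (hnv 0) (hfv 0) (hnv 1) (hfv 2))
  have hn6 : n = 6 := by
    by_contra hcon
    have h4 : n = 4 := by omega
    obtain ⟨m, hm, m1, m2⟩ := exists_third cu b (b + ((2 * 1 : ℕ) : ZMod n))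
    obtain ⟨t, ht, rfl⟩ := zmod_fwd (by omega) b m
    have : t = 0 ∨ t = 2 * 0 + 1 ∨ t = 2 * 1 ∨ t = 2 * 1 + 1 := by omega
    rcases this with rfl | rfl | rfl | rfl
    · exact m1 (by simp)
    · exact hnu 0 hm
    · exact m2 rfl
    · exact hnu 1 hm
  refine ⟨hn6, b, ?_, ?_⟩
  · intro m
    constructor
    · intro hm
      obtain ⟨t, ht, rfl⟩ := zmod_fwd (by omega) b m
      have : t = 0 ∨ t = 2 ∨ t = 4 ∨ t = 2 * 0 + 1 ∨ t = 2 * 1 + 1 ∨ t = 2 * 2 + 1 := by omega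
      rcases this with rfl | rfl | rfl | rfl | rfl | rfl
      · exact Or.inl (by simp)
      · exact Or.inr (Or.inl (by simp))
      · exact Or.inr (Or.inr (by simp))
      · exact (hnu 0 hm).elim
      · exact (hnu 1 hm).elim
      · exact (hnu 2 hm).elim
    · rintro (rfl | rfl | rfl)
      · exact hb
      · simpa using hfu 1
      · have := hfu 2
        norm_num at this
        exact this
  · intro m
    constructor
    · intro hm
      obtain ⟨t, ht, rfl⟩ := zmod_fwd (by omega) b m
      have : t = 1 ∨ t = 3 ∨ t = 5 ∨ t = 2 * 0 ∨ t = 2 * 1 ∨ t = 2 * 2 := by omega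
      rcases this with rfl | rfl | rfl | rfl | rfl | rfl
      · exact Or.inl (by simp)
      · exact Or.inr (Or.inl (by simp))
      · exact Or.inr (Or.inr (by simp))
      · exact (hnv 0 hm).elim
      · exact (hnv 1 hm).elim
      · exact (hnv 2 hm).elim
    · rintro (rfl | rfl | rfl)
      · simpa using hfv 0
      · have := hfv 1
        norm_num at this
        exact this
      · have := hfv 2
        norm_num at this
        exact this

/-- In a (theta, triangle)-free graph, every 2-wheel with non-adjacent
centers is a nested wheel or the cube. -/
theorem statement3 (G : SimpleGraph V) (hTheta : ¬ContainsTheta G) (hTri : G.CliqueFree 3)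
    (n : ℕ) (f : ZMod n → V) (u v : V)
    (hW : Is2WheelCfg G n f u v) (huv : ¬G.Adj u v) :
    NestedCfg G n f u v ∨ CubeCfg G n f u v := by
  have hTri' : ∀ x y z, G.Adj x y → G.Adj y z → G.Adj x z → False := fun x y z h1 h2 h3 =>
    hTri {x, y, z} (is3Clique_triple_iff.2 ⟨h1, h3, h2⟩)
  by_cases h1 : Sparse (fun m => G.Adj u (f m)) (fun m => G.Adj v (f m))
  · by_cases h2 : Sparse (fun m => G.Adj v (f m)) (fun m => G.Adj u (f m))
    · exact Or.inr (cube_of_sparse hTheta hW huv h1 h2)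
    · left
      obtain ⟨i, s, hs, hsn, hA, hB⟩ := not_sparse_nested hTheta hTri' hW.swap
        (fun h => huv h.symm) h2
      refine ⟨i, s, hs, hsn, hA, ?_⟩
      intro m hm
      obtain ⟨e, he, hen, rfl⟩ := hB m hm
      refine ⟨e - s, by omega, ?_⟩
      rw [Nat.cast_sub he]
      ring
  · left
    obtain ⟨i, s, hs, hsn, hA, hB⟩ := not_sparse_nested hTheta hTri' hW huv h1
    refine ⟨i + (s : ZMod n), n - s, by omega, by omega, ?_, ?_⟩
    · intro m hm
      obtain ⟨e, he, hen, rfl⟩ := hB m hm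
      refine ⟨e - s, by omega, ?_⟩
      rw [Nat.cast_sub he]
      ring
    · intro m hm
      obtain ⟨e, he, rfl⟩ := hA m hm
      refine ⟨e, by omega, ?_⟩
      rw [Nat.cast_sub hsn.le]
      simp
end

section
/- Let G be a (theta, prism, pyramid, even wheel, square)-free graph. If W = (H, {u, v}) is a 2-wheel in G such that uv ∉ E(G), then W is either a nested wheel or a cousin wheel. Moreover, if W is nested then |N_H(u) ∩ N_H(v)| ≤ 1. -/
open SimpleGraph

variable {V : Type} [Fintype V] [DecidableEq V]

set_option linter.unusedSectionVars false
set_option linter.unusedSimpArgs false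

namespace TW

/-- An induced path of `G` whose vertices are the `h k` with `P k`. -/
def IP (G : SimpleGraph V) (h : ℕ → V) (a b : ℕ) (P : ℕ → Prop) (l : ℕ) : Prop :=
  ∃ p : G.Walk (h a) (h b), IsInducedPathW G p ∧ (∀ w, w ∈ p.support ↔ ∃ k, P k ∧ w = h k) ∧
    p.length = l

/-- `h` restricted to `[0,N)` is an injection with adjacency relation `A`. -/
structure Emb (G : SimpleGraph V) (N : ℕ) (h : ℕ → V) (A : ℕ → ℕ → Prop) : Prop where
  inj : ∀ i j, i < N → j < N → h i = h j → i = j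
  adj : ∀ i j, i < N → j < N → (G.Adj (h i) (h j) ↔ A i j)

variable {G : SimpleGraph V} {h : ℕ → V} {N : ℕ} {A : ℕ → ℕ → Prop}

lemma IP.single (a : ℕ) : IP G h a a (fun k => k = a) 0 := by
  refine ⟨Walk.nil, ⟨by simp, ?_⟩, by simp, by simp⟩
  intro u v hu hv huv
  simp at hu hv
  subst hu hv
  exact absurd huv (G.loopless.irrefl _)

lemma IP.congr {a b l : ℕ} {P Q : ℕ → Prop} (H : IP G h a b P l) (hPQ : ∀ k, P k ↔ Q k) :
    IP G h a b Q l := by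
  have : P = Q := funext fun k => propext (hPQ k)
  exact this ▸ H

lemma IP.rev {a b l : ℕ} {P : ℕ → Prop} (H : IP G h a b P l) : IP G h b a P l := by
  obtain ⟨p, ⟨hp, hi⟩, hs, hl⟩ := H
  refine ⟨p.reverse, ⟨hp.reverse, ?_⟩, ?_, by simpa using hl⟩
  · intro u v hu hv huv
    simp only [Walk.support_reverse, List.mem_reverse] at hu hv
    simpa using hi u v hu hv huv
  · intro w; simpa using hs w

lemma IP.append (E : Emb G N h A) {a b c l m : ℕ} {P Q : ℕ → Prop} (H : IP G h a b P l)
    (K : IP G h b c Q m) (hP : ∀ k, P k → k < N) (hQ : ∀ k, Q k → k < N)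
    (hd : ∀ k, P k → Q k → k = b)
    (hA : ∀ i j, P i → Q j → A i j → i = b ∨ j = b) :
    IP G h a c (fun k => P k ∨ Q k) (l + m) := by
  obtain ⟨p, ⟨hp, hi⟩, hs, hl⟩ := H
  obtain ⟨q, ⟨hq, hj⟩, ht, hm⟩ := K
  have hPQ : ∀ w, w ∈ p.support → w ∈ q.support → w = h b := by
    intro w hw hw'
    obtain ⟨k, hk, rfl⟩ := (hs _).1 hw
    obtain ⟨k', hk', e⟩ := (ht _).1 hw'
    have := E.inj k k' (hP _ hk) (hQ _ hk') e
    subst this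
    rw [hd _ hk hk']
  have key : ∀ x y, x ∈ p.support → y ∈ q.support → G.Adj x y → x = h b ∨ y = h b := by
    intro x y hx hy hxy
    obtain ⟨k, hk, rfl⟩ := (hs _).1 hx
    obtain ⟨k', hk', rfl⟩ := (ht _).1 hy
    rcases hA k k' hk hk' ((E.adj _ _ (hP _ hk) (hQ _ hk')).1 hxy) with h1 | h1
    · left; rw [h1]
    · right; rw [h1]
  refine ⟨p.append q, ⟨?_, ?_⟩, ?_, by simp [hl, hm]⟩
  · rw [Walk.isPath_def, Walk.support_append, List.nodup_append]
    refine ⟨hp.support_nodup, hq.support_nodup.sublist (List.tail_sublist _), ?_⟩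
    intro x hx y hy hxy
    subst hxy
    have h1 := hPQ x hx (List.mem_of_mem_tail hy)
    subst h1
    have := hq.support_nodup
    rw [← Walk.cons_tail_support] at this
    exact (List.nodup_cons.1 this).1 hy
  · intro x y hx hy hxy
    rw [Walk.toSubgraph_append, Subgraph.sup_adj]
    rw [Walk.mem_support_append_iff] at hx hy
    have cross : ∀ x y, x ∈ p.support → y ∈ q.support → G.Adj x y →
        p.toSubgraph.Adj x y ∨ q.toSubgraph.Adj x y := by
      intro x y hx hy hxy
      rcases key x y hx hy hxy with h1 | h1
      · right; exact hj x y (h1 ▸ q.start_mem_support) hy hxy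
      · left; exact hi x y hx (h1 ▸ p.end_mem_support) hxy
    rcases hx with hx | hx <;> rcases hy with hy | hy
    · left; exact hi _ _ hx hy hxy
    · exact cross _ _ hx hy hxy
    · exact (cross _ _ hy hx hxy.symm).imp (fun h => h.symm) (fun h => h.symm)
    · right; exact hj _ _ hx hy hxy
  · intro w
    rw [Walk.mem_support_append_iff, hs, ht]
    constructor
    · rintro (⟨k, hk, e⟩ | ⟨k, hk, e⟩)
      · exact ⟨k, Or.inl hk, e⟩
      · exact ⟨k, Or.inr hk, e⟩
    · rintro ⟨k, hk | hk, e⟩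
      · left; exact ⟨k, hk, e⟩
      · right; exact ⟨k, hk, e⟩

lemma IP.edge (E : Emb G N h A) {a b : ℕ} (ha : a < N) (hb : b < N) (hab : A a b) :
    IP G h a b (fun k => k = a ∨ k = b) 1 := by
  have hadj := (E.adj a b ha hb).2 hab
  refine ⟨Walk.cons hadj Walk.nil, ⟨by simp [hadj.ne], ?_⟩, ?_, by simp⟩
  · intro x y hx hy hxy
    simp at hx hy ⊢
    rcases hx with rfl | rfl <;> rcases hy with rfl | rfl
    · exact absurd hxy (G.loopless.irrefl _)
    · simp
    · simp
    · exact absurd hxy (G.loopless.irrefl _)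
  · intro w; simp

lemma IP.cons (E : Emb G N h A) {x b c l : ℕ} {P : ℕ → Prop} (H : IP G h b c P l)
    (hx : x < N) (hb : P b) (hP : ∀ k, P k → k < N) (hxb : A x b) (hxP : ¬ P x)
    (hA : ∀ k, P k → A x k → k = b) : IP G h x c (fun k => k = x ∨ P k) (1 + l) := by
  refine (IP.append E (IP.edge E hx (hP _ hb) hxb) H ?_ hP ?_ ?_).congr ?_
  · rintro k (rfl | rfl); exacts [hx, hP _ hb]
  · rintro k (rfl | rfl) hk
    · exact absurd hk hxP
    · rfl
  · rintro i j (rfl | rfl) hj hij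
    · right; exact hA _ hj hij
    · left; rfl
  · intro k
    constructor
    · rintro ((rfl | rfl) | hk)
      · left; rfl
      · right; exact hb
      · right; exact hk
    · rintro (rfl | hk)
      · left; left; rfl
      · right; exact hk

lemma IP.arc (E : Emb G N h A) (i m : ℕ) (hN : i + m < N)
    (hA : ∀ x y, i ≤ x → x ≤ i + m → i ≤ y → y ≤ i + m → (A x y ↔ x + 1 = y ∨ y + 1 = x)) :
    IP G h i (i + m) (fun k => i ≤ k ∧ k ≤ i + m) m := by
  induction m generalizing i with
  | zero => exact (IP.single i).congr (by intro k; omega)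
  | succ m ih =>
    have h1 := ih (i + 1) (by omega) (by intro x y _ _ _ _; exact hA x y (by omega) (by omega) (by omega) (by omega))
    have h2 := IP.cons E (x := i) h1 (by omega) (by omega) (by intro k; omega)
      ((hA _ _ (by omega) (by omega) (by omega) (by omega)).2 (by omega)) (by omega)
      (by intro k hk hik; have := (hA i k (by omega) (by omega) (by omega) (by omega)).1 hik; omega)
    have e : i + 1 + m = i + (m + 1) := by omega
    rw [e, Nat.add_comm 1 m] at h2
    exact h2.congr (by intro k; omega)

lemma theta (E : Emb G N h A) {a b l1 l2 l3 : ℕ} {P Q R : ℕ → Prop}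
    (H1 : IP G h a b P l1) (H2 : IP G h a b Q l2) (H3 : IP G h a b R l3)
    (h1 : 2 ≤ l1) (h2 : 2 ≤ l2) (h3 : 2 ≤ l3)
    (hP : ∀ k, P k → k < N) (hQ : ∀ k, Q k → k < N) (hR : ∀ k, R k → k < N)
    (dPQ : ∀ k, P k → Q k → k = a ∨ k = b) (dPR : ∀ k, P k → R k → k = a ∨ k = b)
    (dQR : ∀ k, Q k → R k → k = a ∨ k = b)
    (aPQ : ∀ i j, P i → Q j → A i j → i = a ∨ i = b ∨ j = a ∨ j = b)
    (aPR : ∀ i j, P i → R j → A i j → i = a ∨ i = b ∨ j = a ∨ j = b)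
    (aQR : ∀ i j, Q i → R j → A i j → i = a ∨ i = b ∨ j = a ∨ j = b) : ContainsTheta G := by
  obtain ⟨p, ip, sp, lp⟩ := H1
  obtain ⟨q, iq, sq, lq⟩ := H2
  obtain ⟨r, ir, sr, lr⟩ := H3
  have D : ∀ {P Q : ℕ → Prop}, (∀ k, P k → k < N) → (∀ k, Q k → k < N) →
      (∀ k, P k → Q k → k = a ∨ k = b) → ∀ w, (∃ k, P k ∧ w = h k) → (∃ k, Q k ∧ w = h k) →
      w = h a ∨ w = h b := by
    rintro P Q hP hQ d w ⟨k, hk, rfl⟩ ⟨k', hk', e⟩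
    have := E.inj _ _ (hP _ hk) (hQ _ hk') e
    subst this
    rcases d k hk hk' with rfl | rfl
    · left; rfl
    · right; rfl
  have B : ∀ {P Q : ℕ → Prop}, (∀ k, P k → k < N) → (∀ k, Q k → k < N) →
      (∀ i j, P i → Q j → A i j → i = a ∨ i = b ∨ j = a ∨ j = b) → ∀ u w, u ≠ h a → u ≠ h b →
      w ≠ h a → w ≠ h b → (∃ k, P k ∧ u = h k) → (∃ k, Q k ∧ w = h k) → ¬ G.Adj u w := by
    rintro P Q hP hQ d u w n1 n2 n3 n4 ⟨k, hk, rfl⟩ ⟨k', hk', rfl⟩ hA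
    rcases d k k' hk hk' ((E.adj _ _ (hP _ hk) (hQ _ hk')).1 hA) with rfl | rfl | rfl | rfl
    all_goals first | exact n1 rfl | exact n2 rfl | exact n3 rfl | exact n4 rfl
  refine ⟨h a, h b, p, q, r, ⟨ip, iq, ir⟩, by omega, ?_, ?_⟩
  · intro w
    rw [sp, sq, sr]
    rintro (⟨x, y⟩ | ⟨x, y⟩ | ⟨x, y⟩)
    exacts [D hP hQ dPQ w x y, D hP hR dPR w x y, D hQ hR dQR w x y]
  · intro u w n1 n2 n3 n4
    rw [sp, sq, sq, sr]
    rintro (⟨x, y⟩ | ⟨x, y⟩ | ⟨x, y⟩)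
    exacts [B hP hQ aPQ u w n1 n2 n3 n4 x y, B hP hR aPR u w n1 n2 n3 n4 x y,
      B hQ hR aQR u w n1 n2 n3 n4 x y]

lemma pyramid (E : Emb G N h A) {a b c d l1 l2 l3 : ℕ} {P Q R : ℕ → Prop}
    (H1 : IP G h a b P l1) (H2 : IP G h a c Q l2) (H3 : IP G h a d R l3)
    (h1 : 1 ≤ l1) (h2 : 2 ≤ l2) (h3 : 2 ≤ l3)
    (hP : ∀ k, P k → k < N) (hQ : ∀ k, Q k → k < N) (hR : ∀ k, R k → k < N)
    (hb : b < N) (hc : c < N) (hd : d < N)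
    (tbc : A b c) (tcd : A c d) (tbd : A b d)
    (dPQ : ∀ k, P k → Q k → k = a) (dPR : ∀ k, P k → R k → k = a)
    (dQR : ∀ k, Q k → R k → k = a)
    (aPQ : ∀ i j, P i → Q j → A i j → i = a ∨ j = a ∨ i = b ∧ j = c)
    (aPR : ∀ i j, P i → R j → A i j → i = a ∨ j = a ∨ i = b ∧ j = d)
    (aQR : ∀ i j, Q i → R j → A i j → i = a ∨ j = a ∨ i = c ∧ j = d) : ContainsPyramid G := by
  obtain ⟨p, ip, sp, lp⟩ := H1
  obtain ⟨q, iq, sq, lq⟩ := H2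
  obtain ⟨r, ir, sr, lr⟩ := H3
  have D : ∀ {P Q : ℕ → Prop}, (∀ k, P k → k < N) → (∀ k, Q k → k < N) →
      (∀ k, P k → Q k → k = a) → ∀ w, (∃ k, P k ∧ w = h k) → (∃ k, Q k ∧ w = h k) →
      w = h a := by
    rintro P Q hP hQ d w ⟨k, hk, rfl⟩ ⟨k', hk', e⟩
    have := E.inj _ _ (hP _ hk) (hQ _ hk') e
    subst this
    rw [d k hk hk']
  have B : ∀ {P Q : ℕ → Prop} {b c : ℕ}, (∀ k, P k → k < N) → (∀ k, Q k → k < N) →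
      (∀ i j, P i → Q j → A i j → i = a ∨ j = a ∨ i = b ∧ j = c) → ∀ u w,
      (∃ k, P k ∧ u = h k) → (∃ k, Q k ∧ w = h k) → u ≠ h a →
      w ≠ h a → G.Adj u w → u = h b ∧ w = h c := by
    rintro P Q b c hP hQ d u w ⟨k, hk, rfl⟩ ⟨k', hk', rfl⟩ n1 n2 hA
    rcases d k k' hk hk' ((E.adj _ _ (hP _ hk) (hQ _ hk')).1 hA) with rfl | rfl | ⟨rfl, rfl⟩
    · exact absurd rfl n1
    · exact absurd rfl n2
    · exact ⟨rfl, rfl⟩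
  refine ⟨h a, h b, h c, h d, p, q, r, ⟨ip, iq, ir⟩, by omega, by omega,
    ⟨(E.adj _ _ hb hc).2 tbc, (E.adj _ _ hc hd).2 tcd, (E.adj _ _ hb hd).2 tbd⟩, ?_, ?_, ?_, ?_⟩
  · intro w
    rw [sp, sq, sr]
    rintro (⟨x, y⟩ | ⟨x, y⟩ | ⟨x, y⟩)
    exacts [D hP hQ dPQ w x y, D hP hR dPR w x y, D hQ hR dQR w x y]
  · intro u w; rw [sp, sq]; exact B hP hQ aPQ u w
  · intro u w; rw [sp, sr]; exact B hP hR aPR u w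
  · intro u w; rw [sq, sr]; exact B hQ hR aQR u w

lemma square (E : Emb G N h A) {a b c d : ℕ} (ha : a < N) (hb : b < N) (hc : c < N) (hd : d < N)
    (hac : a ≠ c) (hbd : b ≠ d)
    (ab : A a b) (bc : A b c) (cd : A c d) (da : A d a) (ac : ¬ A a c) (bd : ¬ A b d) :
    ContainsSquare G := by
  rw [← E.adj] at ab bc cd da ac bd <;> try assumption
  have hac' : h a ≠ h c := fun e => hac (E.inj _ _ ha hc e)
  have hbd' : h b ≠ h d := fun e => hbd (E.inj _ _ hb hd e)
  have ca : ¬ G.Adj (h c) (h a) := fun e => ac e.symm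
  have db : ¬ G.Adj (h d) (h b) := fun e => bd e.symm
  have key : ∀ (z : Fin 4 → V), z = ![h a, h b, h c, h d] → Function.Injective z ∧
      ∀ i j : Fin 4, G.Adj (z i) (z j) ↔ (j = i + 1 ∨ i = j + 1) := by
    rintro z rfl
    constructor
    · intro i j
      fin_cases i <;> fin_cases j <;>
        simp [ab.ne, ab.ne', bc.ne, bc.ne', cd.ne, cd.ne', da.ne, da.ne', hac', hbd', hac'.symm,
          hbd'.symm]
    · intro i j
      fin_cases i <;> fin_cases j <;>
        simp [ab, bc, cd, da, ac, bd, ab.symm, bc.symm, cd.symm, da.symm,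
          ca, db]
  exact ⟨![h a, h b, h c, h d], le_refl _, (key _ rfl).1, (key _ rfl).2⟩

/-- Cyclic adjacency on `[0,n)`. -/
def cyc (n i j : ℕ) : Prop :=
  i + 1 = j ∨ j + 1 = i ∨ (i = 0 ∧ j + 1 = n) ∨ (j = 0 ∧ i + 1 = n)

/-- The rim `g` of a hole with vertex set `R`, and two non-adjacent centers. -/
structure Cf (G : SimpleGraph V) (R : Set V) (u v : V) (n : ℕ) (g : ℕ → V) : Prop where
  hn : 4 ≤ n
  inj : ∀ i j, i < n → j < n → g i = g j → i = j
  adj : ∀ i j, i < n → j < n → (G.Adj (g i) (g j) ↔ cyc n i j)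
  rim : ∀ x, x ∈ R ↔ ∃ k < n, g k = x
  uR : u ∉ R
  vR : v ∉ R
  ne : u ≠ v
  uv : ¬ G.Adj u v
  u3 : 3 ≤ {x | x ∈ R ∧ G.Adj u x}.ncard
  v3 : 3 ≤ {x | x ∈ R ∧ G.Adj v x}.ncard
  uo : Odd {x | x ∈ R ∧ G.Adj u x}.ncard
  vo : Odd {x | x ∈ R ∧ G.Adj v x}.ncard

/-- The graphs under consideration. -/
structure Free (G : SimpleGraph V) : Prop where
  th : ¬ ContainsTheta G
  py : ¬ ContainsPyramid G
  ew : ¬ ContainsEvenWheel G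
  sq : ¬ ContainsSquare G

variable {R : Set V} {u v : V} {n d : ℕ} {g : ℕ → V}

lemma Cf.swap (C : Cf G R u v n g) : Cf G R v u n g :=
  ⟨C.hn, C.inj, C.adj, C.rim, C.vR, C.uR, C.ne.symm, fun e => C.uv e.symm, C.v3, C.u3, C.vo, C.uo⟩

lemma Cf.reindex (C : Cf G R u v n g) (σ τ : ℕ → ℕ) (h1 : ∀ k < n, σ k < n)
    (h2 : ∀ k < n, τ k < n ∧ σ (τ k) = k) (h3 : ∀ i j, i < n → j < n → σ i = σ j → i = j)
    (h4 : ∀ i j, i < n → j < n → (cyc n (σ i) (σ j) ↔ cyc n i j)) :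
    Cf G R u v n (fun k => g (σ k)) where
  hn := C.hn
  inj i j hi hj e := h3 i j hi hj (C.inj _ _ (h1 _ hi) (h1 _ hj) e)
  adj i j hi hj := (C.adj _ _ (h1 _ hi) (h1 _ hj)).trans (h4 i j hi hj)
  rim x := by
    rw [C.rim]
    constructor
    · rintro ⟨k, hk, rfl⟩
      exact ⟨τ k, (h2 k hk).1, by simp only [(h2 k hk).2]⟩
    · rintro ⟨k, hk, rfl⟩
      exact ⟨σ k, h1 k hk, rfl⟩
  uR := C.uR
  vR := C.vR
  ne := C.ne
  uv := C.uv
  u3 := C.u3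
  v3 := C.v3
  uo := C.uo
  vo := C.vo

/-- Rotation by `s`. -/
def rot (n s k : ℕ) : ℕ := if k + s < n then k + s else k + s - n

/-- The reflection exchanging `0` and `d`. -/
def mir (n d k : ℕ) : ℕ := if k ≤ d then d - k else n + d - k

lemma Cf.rot (C : Cf G R u v n g) (s : ℕ) (hs : s < n) :
    Cf G R u v n (fun k => g (rot n s k)) := by
  refine C.reindex (TW.rot n s) (TW.rot n (n - s)) ?_ ?_ ?_ ?_
  · intro k hk; unfold TW.rot; split <;> omega
  · intro k hk; unfold TW.rot; split <;> split <;> omega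
  · intro i j hi hj; unfold TW.rot; split <;> split <;> omega
  · intro i j hi hj; have := C.hn; unfold TW.rot cyc; split <;> split <;> omega

lemma Cf.mir (C : Cf G R u v n g) (d : ℕ) (hs : d < n) :
    Cf G R u v n (fun k => g (mir n d k)) := by
  refine C.reindex (TW.mir n d) (TW.mir n d) ?_ ?_ ?_ ?_
  · intro k hk; unfold TW.mir; split <;> omega
  · intro k hk; unfold TW.mir; split <;> split <;> omega
  · intro i j hi hj; unfold TW.mir; split <;> split <;> omega
  · intro i j hi hj; have := C.hn; unfold TW.mir cyc; split <;> split <;> omega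

/-- Extension of `g` by the two centers. -/
def hh (g : ℕ → V) (n : ℕ) (u v : V) (k : ℕ) : V :=
  if k < n then g k else if k = n then u else v

/-- The adjacency relation of the 2-wheel. -/
def AA (n : ℕ) (U W : ℕ → Prop) (i j : ℕ) : Prop :=
  (i < n ∧ j < n ∧ cyc n i j) ∨ (i = n ∧ j < n ∧ U j) ∨ (j = n ∧ i < n ∧ U i) ∨
    (i = n + 1 ∧ j < n ∧ W j) ∨ (j = n + 1 ∧ i < n ∧ W i)

lemma Cf.ug (C : Cf G R u v n g) {k : ℕ} (hk : k < n) : g k ≠ u :=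
  fun e => C.uR ((C.rim u).2 ⟨k, hk, e⟩)

lemma Cf.vg (C : Cf G R u v n g) {k : ℕ} (hk : k < n) : g k ≠ v :=
  fun e => C.vR ((C.rim v).2 ⟨k, hk, e⟩)

lemma Cf.emb (C : Cf G R u v n g) :
    Emb G (n + 2) (hh g n u v) (AA n (fun k => G.Adj u (g k)) (fun k => G.Adj v (g k))) := by
  have e1 : ∀ k, k < n → hh g n u v k = g k := by intro k hk; simp [hh, hk]
  have e2 : hh g n u v n = u := by simp [hh]
  have e3 : hh g n u v (n + 1) = v := by simp [hh]
  have hc : ∀ k, k < n + 2 → k < n ∨ k = n ∨ k = n + 1 := by intro k hk; omega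
  constructor
  · intro i j hi hj
    rcases hc i hi with hi | rfl | rfl <;> rcases hc j hj with hj | hj | hj <;>
      (try subst hj) <;> simp only [e1, e2, e3, hi, hj]
    · exact C.inj i j hi hj
    · intro e; exact absurd e (C.ug hi)
    · intro e; exact absurd e (C.vg hi)
    · intro e; exact absurd e.symm (C.ug hj)
    · simp
    · intro e; exact absurd e C.ne
    · intro e; exact absurd e.symm (C.vg hj)
    · intro e; exact absurd e.symm C.ne
    · simp
  · have uv := C.uv
    have vu : ¬ G.Adj v u := fun e => C.uv e.symm
    intro i j hi hj
    rcases hc i hi with hi | rfl | rfl <;> rcases hc j hj with hj | hj | hj <;>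
      (try subst hj) <;> simp only [e1, e2, e3, hi, hj]
    · rw [C.adj i j hi hj]; unfold AA; grind
    · rw [G.adj_comm]; unfold AA; grind
    · rw [G.adj_comm]; unfold AA; grind
    · unfold AA; grind
    · unfold AA; simp
    · unfold AA; grind
    · unfold AA; grind
    · unfold AA; grind
    · unfold AA; simp

open Classical in
lemma Cf.card_aux (C : Cf G R u v n g) (w : V) : {x | x ∈ R ∧ G.Adj w x}.ncard =
    ((Finset.range n).filter (fun k => G.Adj w (g k))).card := by
  have : {x | x ∈ R ∧ G.Adj w x} =
      g '' (((Finset.range n).filter (fun k => G.Adj w (g k)) : Finset ℕ) : Set ℕ) := by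
    ext x
    simp only [Set.mem_setOf_eq, C.rim, Set.mem_image, Finset.coe_filter, Finset.mem_range]
    constructor
    · rintro ⟨⟨k, hk, rfl⟩, ha⟩; exact ⟨k, ⟨hk, ha⟩, rfl⟩
    · rintro ⟨k, ⟨hk, ha⟩, rfl⟩; exact ⟨⟨k, hk, rfl⟩, ha⟩
  rw [this, Set.ncard_image_of_injOn, Set.ncard_coe_finset]
  intro i hi j hj e
  simp only [Finset.coe_filter, Finset.mem_range, Set.mem_setOf_eq] at hi hj
  exact C.inj i j hi.1 hj.1 e

/-- Cousin configuration in terms of the rim vertices. -/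
def CusV (G : SimpleGraph V) (R : Set V) (u v : V) : Prop :=
  ∃ p q r s, p ∈ R ∧ q ∈ R ∧ r ∈ R ∧ s ∈ R ∧ G.Adj p q ∧ G.Adj q r ∧ G.Adj r s ∧ p ≠ r ∧ q ≠ s ∧
    (∀ x ∈ R, G.Adj u x ↔ x = p ∨ x = q ∨ x = r) ∧ (∀ x ∈ R, G.Adj v x ↔ x = q ∨ x = r ∨ x = s)

lemma CusV.swap (H : CusV G R u v) : CusV G R v u := by
  obtain ⟨p, q, r, s, hp, hq, hr, hs, pq, qr, rs, pr, qs, h1, h2⟩ := H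
  refine ⟨s, r, q, p, hs, hr, hq, hp, rs.symm, qr.symm, pq.symm, qs.symm, pr.symm, ?_, ?_⟩
  · intro x hx; rw [h2 x hx]; tauto
  · intro x hx; rw [h1 x hx]; tauto

lemma Cf.cus (C : Cf G R u v n g) (p q r s : ℕ) (hp : p < n) (hq : q < n) (hr : r < n) (hs : s < n)
    (pq : cyc n p q) (qr : cyc n q r) (rs : cyc n r s) (pr : p ≠ r) (qs : q ≠ s)
    (h1 : ∀ k < n, G.Adj u (g k) ↔ k = p ∨ k = q ∨ k = r)
    (h2 : ∀ k < n, G.Adj v (g k) ↔ k = q ∨ k = r ∨ k = s) : CusV G R u v := by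
  have e : ∀ i < n, ∀ j < n, g i = g j ↔ i = j := fun i hi j hj => ⟨C.inj i j hi hj, fun e => e ▸ rfl⟩
  refine ⟨g p, g q, g r, g s, (C.rim _).2 ⟨p, hp, rfl⟩, (C.rim _).2 ⟨q, hq, rfl⟩,
    (C.rim _).2 ⟨r, hr, rfl⟩, (C.rim _).2 ⟨s, hs, rfl⟩, (C.adj _ _ hp hq).2 pq,
    (C.adj _ _ hq hr).2 qr, (C.adj _ _ hr hs).2 rs, ?_, ?_, ?_, ?_⟩
  · exact fun e => pr (C.inj _ _ hp hr e)
  · exact fun e => qs (C.inj _ _ hq hs e)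
  · intro x hx
    obtain ⟨k, hk, rfl⟩ := (C.rim x).1 hx
    rw [h1 k hk, e k hk p hp, e k hk q hq, e k hk r hr]
  · intro x hx
    obtain ⟨k, hk, rfl⟩ := (C.rim x).1 hx
    rw [h2 k hk, e k hk q hq, e k hk r hr, e k hk s hs]

/-- An arc of the rim. -/
lemma Cf.arc (C : Cf G R u v n g) (i j : ℕ) (hij : i ≤ j) (hj : j < n) (h0 : 0 < i ∨ j + 1 < n) :
    IP G (hh g n u v) i j (fun k => i ≤ k ∧ k ≤ j) (j - i) := by
  obtain ⟨m, rfl⟩ := Nat.exists_eq_add_of_le hij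
  have := IP.arc C.emb i m (by omega) (by intro x y _ _ _ _; unfold AA cyc; omega)
  rwa [Nat.add_sub_cancel_left]

/-- No wheel center with neighbors `0, c, c+1` only (pyramid). -/
lemma pyr3 (F : Free G) (C : Cf G R u v n g) (c : ℕ) (hc : 2 ≤ c) (hcn : c + 2 < n)
    (hv : ∀ k < n, G.Adj v (g k) ↔ k = 0 ∨ k = c ∨ k = c + 1) : False := by
  have E := C.emb
  have h1 : IP G (hh g n u v) 0 (n + 1) (fun k => k = 0 ∨ k = n + 1) 1 :=
    IP.edge E (by omega) (by omega) (by unfold AA cyc; grind)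
  have h2 := C.arc 0 c (by omega) (by omega) (by omega)
  have h3 := IP.cons E (x := 0) (C.arc (c + 1) (n - 1) (by omega) (by omega) (by omega)).rev
    (by omega) (by omega) (by omega) (by unfold AA cyc; omega) (by omega)
    (by intro k; unfold AA cyc; omega)
  refine F.py (pyramid E h1 h2 h3 (by omega) (by omega) (by omega) (by omega) (by omega)
    (by omega) (by omega) (by omega) (by omega) ?_ ?_ ?_ ?_ ?_ ?_ ?_ ?_ ?_)
  · unfold AA cyc; grind
  · unfold AA cyc; grind
  · unfold AA cyc; grind
  · intro k; omega
  · intro k; omega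
  · intro k; omega
  · intro i j hi hj; unfold AA cyc; grind
  · intro i j hi hj; unfold AA cyc; grind
  · intro i j hi hj; unfold AA cyc; grind

/-- In a sector hole, `v` does not have exactly two non-adjacent neighbors (theta). -/
lemma th2 (F : Free G) (C : Cf G R u v n g) (hd2 : 2 ≤ d) (hdn : d + 2 ≤ n)
    (u0 : G.Adj u (g 0)) (ud : G.Adj u (g d)) (us : ∀ k, 0 < k → k < d → ¬ G.Adj u (g k))
    (c c' : ℕ) (hcc : c + 2 ≤ c') (hc' : c' ≤ d)
    (hv : ∀ k ≤ d, G.Adj v (g k) ↔ k = c ∨ k = c') : False := by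
  have E := C.emb
  have vc := (hv c (by omega)).2 (by omega)
  have vc' := (hv c' (by omega)).2 (by omega)
  have h1 : IP G (hh g n u v) c c' _ _ := IP.cons E (x := c) (IP.edge E (a := n + 1) (b := c')
    (by omega) (by omega) (by unfold AA cyc; grind))
    (by omega) (by omega) (by omega) (by unfold AA cyc; grind) (by omega)
    (by intro k; unfold AA cyc; grind)
  have h2 := C.arc c c' (by omega) (by omega) (by omega)
  have h3 := IP.cons E (x := n) (C.arc c' d (by omega) (by omega) (by omega)).rev
    (by omega) (by omega) (by omega) (by unfold AA cyc; grind) (by omega)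
    (by intro k; unfold AA cyc; grind)
  have h4 := IP.cons E (x := 0) h3
    (by omega) (by omega) (by omega) (by unfold AA cyc; grind) (by omega)
    (by intro k; unfold AA cyc; grind)
  have h5 := IP.append E (C.arc 0 c (by omega) (by omega) (by omega)).rev h4 (by omega)
    (by omega) (by omega) (by intro i j hi hj; unfold AA cyc; grind)
  refine F.th (theta E h1 h2 h5 (by omega) (by omega) (by omega) (by omega) (by omega)
    (by omega) ?_ ?_ ?_ ?_ ?_ ?_)
  · intro k; omega
  · intro k; omega
  · intro k; omega
  · intro i j hi hj; unfold AA cyc; grind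
  · intro i j hi hj; unfold AA cyc; grind
  · intro i j hi hj; unfold AA cyc; grind

lemma closest (A B : ℕ → Prop) (lo hi : ℕ) : ∀ m i j : ℕ, i - j + (j - i) ≤ m → lo ≤ i → i ≤ hi →
    lo ≤ j → j ≤ hi → A i → B j →
    ∃ i j, lo ≤ i ∧ i ≤ hi ∧ lo ≤ j ∧ j ≤ hi ∧ A i ∧ B j ∧
      ∀ k, min i j ≤ k → k ≤ max i j → (A k → k = i) ∧ (B k → k = j) := by
  intro m
  induction m with
  | zero =>
    intro i j hm h1 h2 h3 h4 ha hb
    exact ⟨i, j, h1, h2, h3, h4, ha, hb, by intro k _ _; constructor <;> intro <;> omega⟩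
  | succ m ih =>
    intro i j hm h1 h2 h3 h4 ha hb
    by_cases hA : ∃ k, min i j ≤ k ∧ k ≤ max i j ∧ A k ∧ k ≠ i
    · obtain ⟨k, k1, k2, k3, k4⟩ := hA
      exact ih k j (by omega) (by omega) (by omega) h3 h4 k3 hb
    by_cases hB : ∃ k, min i j ≤ k ∧ k ≤ max i j ∧ B k ∧ k ≠ j
    · obtain ⟨k, k1, k2, k3, k4⟩ := hB
      exact ih i k (by omega) h1 h2 (by omega) (by omega) ha k3
    refine ⟨i, j, h1, h2, h3, h4, ha, hb, fun k k1 k2 => ⟨fun h => ?_, fun h => ?_⟩⟩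
    · by_contra hk; exact hA ⟨k, k1, k2, h, hk⟩
    · by_contra hk; exact hB ⟨k, k1, k2, h, hk⟩

/-- A path from `v` to `u` through an interval of the rim. -/
lemma vpath (C : Cf G R u v n g) (lo hi : ℕ) (hlo : 0 < lo) (hhi : hi < n) (i j : ℕ)
    (h1 : lo ≤ i) (h2 : i ≤ hi) (h3 : lo ≤ j) (h4 : j ≤ hi) (hi' : G.Adj v (g i))
    (hj' : G.Adj u (g j)) : ∃ x y l, lo ≤ x ∧ x ≤ y ∧ y ≤ hi ∧ 2 ≤ l ∧
      IP G (hh g n u v) (n + 1) n (fun k => k = n + 1 ∨ k = n ∨ (x ≤ k ∧ k ≤ y)) l := by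
  have E := C.emb
  obtain ⟨i, j, h1, h2, h3, h4, ha, hb, hk⟩ := closest (fun k => G.Adj v (g k))
    (fun k => G.Adj u (g k)) lo hi _ i j le_rfl h1 h2 h3 h4 hi' hj'
  have base : IP G (hh g n u v) i j (fun k => min i j ≤ k ∧ k ≤ max i j) (max i j - min i j) := by
    rcases le_total i j with hij | hij
    · simpa [hij] using C.arc i j hij (by omega) (by omega)
    · simpa [hij] using (C.arc j i hij (by omega) (by omega)).rev
  have h5 := IP.cons E (x := n + 1) base
    (by omega) (by omega) (by omega) (by unfold AA cyc; grind) (by omega)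
    (by intro k; unfold AA cyc; grind)
  have h6 := (IP.cons E (x := n) h5.rev
    (by omega) (by omega) (by omega) (by unfold AA cyc; grind) (by omega)
    (by intro k; unfold AA cyc; grind)).rev
  exact ⟨min i j, max i j, _, by omega, by omega, by omega, by omega,
    h6.congr (by intro k; omega)⟩

lemma first (A : ℕ → Prop) (c : ℕ) (hc : A c) : ∃ k ≤ c, A k ∧ ∀ m < k, ¬ A m := by
  classical
  exact ⟨Nat.find ⟨c, hc⟩, Nat.find_le hc, Nat.find_spec ⟨c, hc⟩, fun m hm => Nat.find_min ⟨c, hc⟩ hm⟩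

lemma last (A : ℕ → Prop) (c d : ℕ) (hcd : c ≤ d) (hc : A c) :
    ∃ k, c ≤ k ∧ k ≤ d ∧ A k ∧ ∀ m, k < m → m ≤ d → ¬ A m := by
  obtain ⟨k, h1, h2, h3⟩ := first (fun k => A (d - k)) (d - c) (by
    have : d - (d - c) = c := by omega
    simpa [this] using hc)
  refine ⟨d - k, by omega, by omega, h2, fun m h4 h5 => ?_⟩
  have := h3 (d - m) (by omega)
  have e : d - (d - m) = m := by omega
  simpa [e] using this

/-- The main path argument. -/
lemma noPath (F : Free G) (C : Cf G R u v n g) (hd2 : 2 ≤ d) (hdn : d + 2 ≤ n)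
    (u0 : G.Adj u (g 0)) (ud : G.Adj u (g d)) (us : ∀ k, 0 < k → k < d → ¬ G.Adj u (g k))
    (c0 : ℕ) (hc0 : 0 < c0) (hc0d : c0 < d) (vc0 : G.Adj v (g c0))
    (i j : ℕ) (h1 : d + 2 ≤ i) (h2 : i + 2 ≤ n) (h3 : d + 2 ≤ j) (h4 : j + 2 ≤ n)
    (hi' : G.Adj v (g i)) (hj' : G.Adj u (g j)) : False := by
  have E := C.emb
  obtain ⟨x, y, l, hx, hxy, hy, hl, HP⟩ := vpath C (d + 2) (n - 2) (by omega) (by omega) i j h1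
    (by omega) h3 (by omega) hi' hj'
  obtain ⟨c, hc1, vc, hc2⟩ := first (fun k => G.Adj v (g k)) c0 vc0
  obtain ⟨c', hc'1, hc'3, vc', hc'2⟩ := last (fun k => G.Adj v (g k)) c0 d hc0d.le vc0
  have Q1 := (IP.cons E (x := n) (C.arc 0 c (by omega) (by omega) (by omega))
    (by omega) (by omega) (by omega) (by unfold AA cyc; grind) (by omega)
    (by intro k; unfold AA cyc; grind))
  have Q2 := (IP.cons E (x := n) (C.arc c' d (by omega) (by omega) (by omega)).rev
    (by omega) (by omega) (by omega) (by unfold AA cyc; grind) (by omega)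
    (by intro k; unfold AA cyc; grind))
  rcases (show c = c' ∨ c' = c + 1 ∨ c + 2 ≤ c' by omega) with hcc | hcc | hcc
  · have Q3 := IP.cons E (x := c) HP (by omega) (by omega) (by omega) (by unfold AA cyc; grind)
      (by omega) (by intro k; unfold AA cyc; grind)
    subst hcc
    refine F.th (theta E Q1.rev Q2.rev Q3 (by omega) (by omega) (by omega) (by omega) (by omega)
      (by omega) ?_ ?_ ?_ ?_ ?_ ?_)
    · intro k; omega
    · intro k; omega
    · intro k; omega
    · intro i j hi hj; unfold AA cyc; grind
    · intro i j hi hj; unfold AA cyc; grind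
    · intro i j hi hj; unfold AA cyc; grind
  · subst hcc
    by_cases hc : c = 0
    · refine F.py (pyramid E Q1 Q2 HP.rev (by omega) (by omega) (by omega) (by omega) (by omega)
        (by omega) (by omega) (by omega) (by omega) ?_ ?_ ?_ ?_ ?_ ?_ ?_ ?_ ?_)
      · unfold AA cyc; grind
      · unfold AA cyc; grind
      · unfold AA cyc; grind
      · intro k; omega
      · intro k; omega
      · intro k; omega
      · intro i j hi hj; unfold AA cyc; grind
      · intro i j hi hj; unfold AA cyc; grind
      · intro i j hi hj; unfold AA cyc; grind
    · refine F.py (pyramid E Q2 Q1 HP.rev (by omega) (by omega) (by omega) (by omega) (by omega)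
        (by omega) (by omega) (by omega) (by omega) ?_ ?_ ?_ ?_ ?_ ?_ ?_ ?_ ?_)
      · unfold AA cyc; grind
      · unfold AA cyc; grind
      · unfold AA cyc; grind
      · intro k; omega
      · intro k; omega
      · intro k; omega
      · intro i j hi hj; unfold AA cyc; grind
      · intro i j hi hj; unfold AA cyc; grind
      · intro i j hi hj; unfold AA cyc; grind
  · have R1 := (IP.cons E (x := n + 1) Q1.rev
      (by omega) (by omega) (by omega) (by unfold AA cyc; grind) (by omega)
      (by intro k; unfold AA cyc; grind))
    have R2 := (IP.cons E (x := n + 1) Q2.rev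
      (by omega) (by omega) (by omega) (by unfold AA cyc; grind) (by omega)
      (by intro k; unfold AA cyc; grind))
    refine F.th (theta E R1 R2 HP (by omega) (by omega) (by omega) (by omega) (by omega)
      (by omega) ?_ ?_ ?_ ?_ ?_ ?_)
    · intro k; omega
    · intro k; omega
    · intro k; omega
    · intro i j hi hj; unfold AA cyc; grind
    · intro i j hi hj; unfold AA cyc; grind
    · intro i j hi hj; unfold AA cyc; grind

/-- The crossing configuration: `N(u) ∩ [0,d] = {0,d}`, `N(v) ∩ [d+1,n-1] = {d+1,n-1}`,
`v` has a neighbor strictly inside `[0,d]` and `u` one strictly inside `[d+1,n-1]`. -/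
structure KC (G : SimpleGraph V) (R : Set V) (u v : V) (n d : ℕ) (g : ℕ → V) : Prop where
  C : Cf G R u v n g
  hd2 : 2 ≤ d
  hdn : d + 4 ≤ n
  u0 : G.Adj u (g 0)
  ud : G.Adj u (g d)
  us : ∀ k, 0 < k → k < d → ¬ G.Adj u (g k)
  v0 : G.Adj v (g (n - 1))
  vd : G.Adj v (g (d + 1))
  vs : ∀ k, d + 1 < k → k < n - 1 → ¬ G.Adj v (g k)
  hc : ∃ c, 0 < c ∧ c < d ∧ G.Adj v (g c)
  hq : ∃ q, d + 1 < q ∧ q < n - 1 ∧ G.Adj u (g q)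

lemma KC.mir (K : KC G R u v n d g) : KC G R u v n d (fun k => g (mir n d k)) := by
  have h2 := K.hd2
  have h3 := K.hdn
  refine ⟨K.C.mir d (by omega), h2, h3, ?_, ?_, ?_, ?_, ?_, ?_, ?_, ?_⟩
  · have : TW.mir n d 0 = d := by simp [TW.mir]
    rw [this]; exact K.ud
  · have : TW.mir n d d = 0 := by simp [TW.mir]
    rw [this]; exact K.u0
  · intro k h4 h5
    have : TW.mir n d k = d - k := by simp [TW.mir]; omega
    rw [this]; exact K.us _ (by omega) (by omega)
  · have : TW.mir n d (n - 1) = d + 1 := by unfold TW.mir; split <;> omega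
    rw [this]; exact K.vd
  · have : TW.mir n d (d + 1) = n - 1 := by unfold TW.mir; split <;> omega
    rw [this]; exact K.v0
  · intro k h4 h5
    have : TW.mir n d k = n + d - k := by unfold TW.mir; split <;> omega
    rw [this]; exact K.vs _ (by omega) (by omega)
  · obtain ⟨c, h4, h5, h6⟩ := K.hc
    refine ⟨d - c, by omega, by omega, ?_⟩
    have : TW.mir n d (d - c) = c := by unfold TW.mir; split <;> omega
    rwa [this]
  · obtain ⟨c, h4, h5, h6⟩ := K.hq
    refine ⟨n + d - c, by omega, by omega, ?_⟩
    have : TW.mir n d (n + d - c) = c := by unfold TW.mir; split <;> omega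
    rwa [this]

lemma KC.swap (K : KC G R u v n d g) : KC G R v u n (n - 2 - d) (fun k => g (TW.mir n (n - 1) k)) := by
  have h2 := K.hd2
  have h3 := K.hdn
  refine ⟨K.C.swap.mir (n - 1) (by omega), by omega, by omega, ?_, ?_, ?_, ?_, ?_, ?_, ?_, ?_⟩
  · have : TW.mir n (n - 1) 0 = n - 1 := by unfold TW.mir; split <;> omega
    rw [this]; exact K.v0
  · have : TW.mir n (n - 1) (n - 2 - d) = d + 1 := by unfold TW.mir; split <;> omega
    rw [this]; exact K.vd
  · intro k h4 h5
    have : TW.mir n (n - 1) k = n - 1 - k := by unfold TW.mir; split <;> omega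
    rw [this]; exact K.vs _ (by omega) (by omega)
  · have : TW.mir n (n - 1) (n - 1) = 0 := by unfold TW.mir; split <;> omega
    rw [this]; exact K.u0
  · have : TW.mir n (n - 1) (n - 2 - d + 1) = d := by unfold TW.mir; split <;> omega
    rw [this]; exact K.ud
  · intro k h4 h5
    have : TW.mir n (n - 1) k = n - 1 - k := by unfold TW.mir; split <;> omega
    rw [this]; exact K.us _ (by omega) (by omega)
  · obtain ⟨c, h4, h5, h6⟩ := K.hq
    refine ⟨n - 1 - c, by omega, by omega, ?_⟩
    have : TW.mir n (n - 1) (n - 1 - c) = c := by unfold TW.mir; split <;> omega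
    rwa [this]
  · obtain ⟨c, h4, h5, h6⟩ := K.hc
    refine ⟨n - 1 - c, by omega, by omega, ?_⟩
    have : TW.mir n (n - 1) (n - 1 - c) = c := by unfold TW.mir; split <;> omega
    rwa [this]

lemma KC.c00 (F : Free G) (K : KC G R u v n d g) (p : ¬ G.Adj v (g 0)) (r : ¬ G.Adj u (g (n - 1)))
    (p' : ¬ G.Adj v (g d)) (r' : ¬ G.Adj u (g (d + 1))) : False := by
  obtain ⟨C, hd2, hdn, u0, ud, us, v0, vd, vs, ⟨c0, hc0, hc0d, vc0⟩, hq⟩ := K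
  have E := C.emb
  obtain ⟨c, hc1, hc2, vc, hc3⟩ := last (fun k => G.Adj v (g k)) c0 d hc0d.le vc0
  have hcd : c ≠ d := by rintro rfl; exact p' vc
  by_cases hc1' : c = 1
  · refine F.sq (square E (a := n + 1) (b := c) (c := 0) (d := n - 1) (by omega) (by omega)
      (by omega) (by omega) (by omega) (by omega) ?_ ?_ ?_ ?_ ?_ ?_)
    all_goals (unfold AA cyc; grind)
  have h1 := IP.cons E (x := n + 1) (C.arc c d (by omega) (by omega) (by omega))
    (by omega) (by omega) (by omega) (by unfold AA cyc; grind) (by omega)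
    (by intro k; unfold AA cyc; grind)
  have h2 := IP.edge E (a := n) (b := d) (by omega) (by omega) (by unfold AA cyc; grind)
  have h2 := IP.cons E (x := 0) h2
    (by omega) (by omega) (by omega) (by unfold AA cyc; grind) (by omega)
    (by intro k; unfold AA cyc; grind)
  have h2 := IP.cons E (x := n - 1) h2
    (by omega) (by omega) (by omega) (by unfold AA cyc; grind) (by omega)
    (by intro k; unfold AA cyc; grind)
  have h2 := IP.cons E (x := n + 1) h2
    (by omega) (by omega) (by omega) (by unfold AA cyc; grind) (by omega)
    (by intro k; unfold AA cyc; grind)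
  have h3 := IP.edge E (a := d + 1) (b := d) (by omega) (by omega) (by unfold AA cyc; grind)
  have h3 := IP.cons E (x := n + 1) h3
    (by omega) (by omega) (by omega) (by unfold AA cyc; grind) (by omega)
    (by intro k; unfold AA cyc; grind)
  refine F.th (theta E h1 h2 h3 (by omega) (by omega) (by omega) (by omega) (by omega)
    (by omega) ?_ ?_ ?_ ?_ ?_ ?_)
  · intro k; omega
  · intro k; omega
  · intro k; omega
  · intro i j hi hj; unfold AA cyc; grind
  · intro i j hi hj; unfold AA cyc; grind
  · intro i j hi hj; unfold AA cyc; grind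

lemma KC.c10 (F : Free G) (K : KC G R u v n d g) (p : ¬ G.Adj v (g 0)) (r : ¬ G.Adj u (g (n - 1)))
    (p' : G.Adj v (g d)) (r' : ¬ G.Adj u (g (d + 1))) : False := by
  obtain ⟨C, hd2, hdn, u0, ud, us, v0, vd, vs, hc, ⟨q0, hq0, hq0n, uq0⟩⟩ := K
  have E := C.emb
  obtain ⟨q, hq1, ⟨hq2, uq⟩, hq3⟩ := first (fun k => d + 1 < k ∧ G.Adj u (g k)) q0 ⟨hq0, uq0⟩
  by_cases hqn : q = n - 2
  · refine F.sq (square E (a := n) (b := 0) (c := n - 1) (d := q) (by omega) (by omega) (by omega)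
      (by omega) (by omega) (by omega) ?_ ?_ ?_ ?_ ?_ ?_)
    all_goals (unfold AA cyc; grind)
  have h1 := IP.edge E (a := n) (b := d) (by omega) (by omega) (by unfold AA cyc; grind)
  have h2 := IP.cons E (x := n) (C.arc (d + 1) q (by omega) (by omega) (by omega)).rev
    (by omega) (by omega) (by omega) (by unfold AA cyc; grind) (by omega)
    (by intro k; unfold AA cyc; grind)
  have h3 := IP.edge E (a := n - 1) (b := n + 1) (by omega) (by omega) (by unfold AA cyc; grind)
  have h3 := IP.cons E (x := 0) h3
    (by omega) (by omega) (by omega) (by unfold AA cyc; grind) (by omega)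
    (by intro k; unfold AA cyc; grind)
  have h3 := IP.cons E (x := n) h3
    (by omega) (by omega) (by omega) (by unfold AA cyc; grind) (by omega)
    (by intro k; unfold AA cyc; grind)
  refine F.py (pyramid E h1 h2 h3 (by omega) (by omega) (by omega) (by omega) (by omega)
    (by omega) (by omega) (by omega) (by omega) ?_ ?_ ?_ ?_ ?_ ?_ ?_ ?_ ?_)
  · unfold AA cyc; grind
  · unfold AA cyc; grind
  · unfold AA cyc; grind
  · intro k; omega
  · intro k; omega
  · intro k; omega
  · intro i j hi hj; unfold AA cyc; grind
  · intro i j hi hj; unfold AA cyc; grind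
  · intro i j hi hj; unfold AA cyc; grind

lemma KC.c11 (F : Free G) (K : KC G R u v n d g) (p : ¬ G.Adj v (g 0)) (r : ¬ G.Adj u (g (n - 1)))
    (r' : G.Adj u (g (d + 1))) : False := by
  obtain ⟨C, hd2, hdn, u0, ud, us, v0, vd, vs, ⟨c0, hc0, hc0d, vc0⟩, hq⟩ := K
  have E := C.emb
  obtain ⟨c, hc1, vc, hc2⟩ := first (fun k => G.Adj v (g k)) c0 vc0
  have hc0' : c ≠ 0 := by rintro rfl; exact p vc
  have h1 := (IP.cons E (x := n + 1) (C.arc 0 c (by omega) (by omega) (by omega)).rev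
    (by omega) (by omega) (by omega) (by unfold AA cyc; grind) (by omega)
    (by intro k; unfold AA cyc; grind)).rev
  have h2 := IP.edge E (a := d + 1) (b := n + 1) (by omega) (by omega) (by unfold AA cyc; grind)
  have h2 := IP.cons E (x := n) h2
    (by omega) (by omega) (by omega) (by unfold AA cyc; grind) (by omega)
    (by intro k; unfold AA cyc; grind)
  have h2 := IP.cons E (x := 0) h2
    (by omega) (by omega) (by omega) (by unfold AA cyc; grind) (by omega)
    (by intro k; unfold AA cyc; grind)
  have h3 := IP.edge E (a := n - 1) (b := n + 1) (by omega) (by omega) (by unfold AA cyc; grind)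
  have h3 := IP.cons E (x := 0) h3
    (by omega) (by omega) (by omega) (by unfold AA cyc; grind) (by omega)
    (by intro k; unfold AA cyc; grind)
  refine F.th (theta E h1 h2 h3 (by omega) (by omega) (by omega) (by omega) (by omega)
    (by omega) ?_ ?_ ?_ ?_ ?_ ?_)
  · intro k; omega
  · intro k; omega
  · intro k; omega
  · intro i j hi hj; unfold AA cyc; grind
  · intro i j hi hj; unfold AA cyc; grind
  · intro i j hi hj; unfold AA cyc; grind

lemma KC.half (F : Free G) (K : KC G R u v n d g) (p : ¬ G.Adj v (g 0))
    (r : ¬ G.Adj u (g (n - 1))) : False := by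
  have h2 := K.hd2
  have h3 := K.hdn
  by_cases r' : G.Adj u (g (d + 1))
  · by_cases p' : G.Adj v (g d)
    · exact K.c11 F p r r'
    · have e1 : TW.mir n (n - 1) 0 = n - 1 := by unfold TW.mir; split <;> omega
      have e2 : TW.mir n (n - 1) (n - 1) = 0 := by unfold TW.mir; split <;> omega
      have e3 : TW.mir n (n - 1) (n - 2 - d) = d + 1 := by unfold TW.mir; split <;> omega
      have e4 : TW.mir n (n - 1) (n - 2 - d + 1) = d := by unfold TW.mir; split <;> omega
      refine K.swap.c10 F ?_ ?_ ?_ ?_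
      · rwa [e1]
      · rwa [e2]
      · rwa [e3]
      · rwa [e4]
  · by_cases p' : G.Adj v (g d)
    · exact K.c10 F p r p' r'
    · exact K.c00 F p r p' r'

lemma KC.false (F : Free G) (K : KC G R u v n d g) : False := by
  have h2 := K.hd2
  have h3 := K.hdn
  have E := K.C.emb
  have u0 := K.u0
  have ud := K.ud
  have v0 := K.v0
  have vd := K.vd
  by_cases h : ¬ G.Adj v (g 0) ∧ ¬ G.Adj u (g (n - 1))
  · exact K.half F h.1 h.2
  have key : ¬ G.Adj v (g d) ∧ ¬ G.Adj u (g (d + 1)) := by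
    by_cases p : G.Adj v (g 0)
    · constructor
      · intro p'
        refine F.sq (square E (a := n) (b := 0) (c := n + 1) (d := d) (by omega) (by omega)
          (by omega) (by omega) (by omega) (by omega) ?_ ?_ ?_ ?_ ?_ ?_)
        all_goals (unfold AA cyc; grind)
      · intro r'
        refine F.sq (square E (a := n) (b := 0) (c := n + 1) (d := d + 1) (by omega) (by omega)
          (by omega) (by omega) (by omega) (by omega) ?_ ?_ ?_ ?_ ?_ ?_)
        all_goals (unfold AA cyc; grind)
    · have r : G.Adj u (g (n - 1)) := by tauto
      constructor
      · intro p'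
        refine F.sq (square E (a := n) (b := n - 1) (c := n + 1) (d := d) (by omega) (by omega)
          (by omega) (by omega) (by omega) (by omega) ?_ ?_ ?_ ?_ ?_ ?_)
        all_goals (unfold AA cyc; grind)
      · intro r'
        refine F.sq (square E (a := n) (b := n - 1) (c := n + 1) (d := d + 1) (by omega) (by omega)
          (by omega) (by omega) (by omega) (by omega) ?_ ?_ ?_ ?_ ?_ ?_)
        all_goals (unfold AA cyc; grind)
  have e1 : TW.mir n d 0 = d := by unfold TW.mir; split <;> omega
  have e2 : TW.mir n d (n - 1) = d + 1 := by unfold TW.mir; split <;> omega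
  refine K.mir.half F ?_ ?_
  · rw [e1]; exact key.1
  · rw [e2]; exact key.2

lemma ncard_zmod (m : ℕ) [NeZero m] (P : ZMod m → Prop) [DecidablePred fun i : ℕ => P (i : ZMod m)] :
    {x : ZMod m | P x}.ncard = ((Finset.range m).filter (fun i : ℕ => P (i : ZMod m))).card := by
  have : {x : ZMod m | P x} = (fun i : ℕ => (i : ZMod m)) ''
      (((Finset.range m).filter (fun i : ℕ => P (i : ZMod m)) : Finset ℕ) : Set ℕ) := by
    ext x
    simp only [Set.mem_ofPred_eq, Set.mem_image, Finset.coe_filter, Finset.mem_range]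
    constructor
    · intro hx
      exact ⟨x.val, ⟨ZMod.val_lt x, by simpa using hx⟩, by simp⟩
    · rintro ⟨k, ⟨hk, ha⟩, rfl⟩; exact ha
  rw [this, Set.InjOn.ncard_image, Set.ncard_coe_finset]
  intro i hi j hj e
  simp only [Finset.coe_filter, Finset.mem_range, Set.mem_ofPred_eq] at hi hj
  have := congrArg ZMod.val e
  simpa [ZMod.val_natCast, Nat.mod_eq_of_lt hi.1, Nat.mod_eq_of_lt hj.1] using this

open Classical in
/-- If `v` has a positive even number of neighbors in a sector, then these are two
adjacent vertices. -/
lemma even2 (F : Free G) (C : Cf G R u v n g) (hd2 : 2 ≤ d) (hdn : d + 2 ≤ n)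
    (u0 : G.Adj u (g 0)) (ud : G.Adj u (g d)) (us : ∀ k, 0 < k → k < d → ¬ G.Adj u (g k))
    (c0 : ℕ) (hc0d : c0 ≤ d) (vc0 : G.Adj v (g c0))
    (he : Even ((Finset.range (d + 1)).filter (fun k => G.Adj v (g k))).card) :
    ∃ c, c + 1 ≤ d ∧ ∀ k ≤ d, G.Adj v (g k) ↔ k = c ∨ k = c + 1 := by
  have E := C.emb
  set S := (Finset.range (d + 1)).filter (fun k => G.Adj v (g k)) with hS
  have mS : ∀ k, k ∈ S ↔ k ≤ d ∧ G.Adj v (g k) := by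
    intro k; simp [hS, Nat.lt_succ_iff]
  have hpos : 0 < S.card := Finset.card_pos.2 ⟨c0, (mS _).2 ⟨hc0d, vc0⟩⟩
  have hle : ¬ 3 ≤ S.card := by
    intro h3
    haveI : NeZero (d + 2) := ⟨by omega⟩
    let ix : ℕ → ℕ := fun k => if k ≤ d then k else n
    have hix : ∀ k, ix k < n + 2 := by intro k; simp only [ix]; split <;> omega
    let H : ZMod (d + 2) → V := fun m => hh g n u v (ix m.val)
    have hlt : ∀ m : ZMod (d + 2), m.val < d + 2 := fun m => ZMod.val_lt m
    have hvi : ∀ i j : ZMod (d + 2), i.val = j.val → i = j := fun i j e => ZMod.val_injective _ e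
    have hsucc : ∀ i j : ZMod (d + 2), j = i + 1 ↔
        (j.val = i.val + 1 ∨ (i.val = d + 1 ∧ j.val = 0)) := by
      intro i j
      have h1 : (i + 1).val = (i.val + 1) % (d + 2) := by
        rw [ZMod.val_add, ZMod.val_one'' (by omega)]
      have hi := hlt i
      have hj := hlt j
      constructor
      · rintro rfl
        rw [h1]
        by_cases h : i.val = d + 1
        · right; simp [h]
        · left; rw [Nat.mod_eq_of_lt (by omega)]
      · rintro (h | ⟨h, h'⟩)
        · apply hvi; rw [h1, h, Nat.mod_eq_of_lt (by omega)]
        · apply hvi; rw [h1, h, h']; simp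
    have hcard : {m : ZMod (d + 2) | G.Adj v (H m)}.ncard = S.card := by
      rw [ncard_zmod (d + 2) (fun m => G.Adj v (H m))]
      congr 1
      ext k
      rw [mS]
      simp only [Finset.mem_filter, Finset.mem_range]
      have hv : ∀ k, G.Adj v (hh g n u v k) ↔ G.Adj (hh g n u v (n + 1)) (hh g n u v k) := by
        intro k; simp [hh]
      constructor
      · rintro ⟨h1, h2⟩
        have e : ((k : ZMod (d + 2))).val = k := by
          rw [ZMod.val_natCast, Nat.mod_eq_of_lt h1]
        simp only [H, e] at h2
        rw [hv, E.adj _ _ (by omega) (hix _)] at h2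
        simp only [ix] at h2
        unfold AA cyc at h2
        grind
      · rintro ⟨h1, h2⟩
        have e : ((k : ZMod (d + 2))).val = k := by
          rw [ZMod.val_natCast, Nat.mod_eq_of_lt (by omega)]
        refine ⟨by omega, ?_⟩
        simp only [H, e]
        rw [hv, E.adj _ _ (by omega) (hix _)]
        simp only [ix]
        unfold AA cyc
        grind
    refine F.ew ⟨d + 2, H, v, ⟨by omega, ?_, ?_⟩, ?_, by rw [hcard]; exact h3, by rw [hcard]; exact he⟩
    · intro i j e
      apply hvi
      have := E.inj _ _ (hix _) (hix _) e
      have hi := hlt i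
      have hj := hlt j
      simp only [ix] at this
      split at this <;> split at this <;> omega
    · intro i j
      rw [E.adj _ _ (hix _) (hix _), hsucc, hsucc]
      have hi := hlt i
      have hj := hlt j
      simp only [ix]
      generalize i.val = a at *
      generalize j.val = b at *
      have us' : ∀ k ≤ d, G.Adj u (g k) ↔ k = 0 ∨ k = d := by grind
      unfold AA cyc
      split <;> split
      · omega
      · have := us' a (by omega)
        grind
      · have := us' b (by omega)
        grind
      · omega
    · rintro ⟨m, hm⟩
      have e : hh g n u v (n + 1) = v := by simp [hh]
      rw [← e] at hm
      have := E.inj _ _ (hix _) (by omega) hm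
      simp only [ix] at this
      split at this <;> omega
  have h2 : S.card = 2 := by obtain ⟨r, hr⟩ := he; omega
  obtain ⟨x, y, hxy, hSxy⟩ := Finset.card_eq_two.1 h2
  have key : ∀ k ≤ d, G.Adj v (g k) ↔ k = x ∨ k = y := by
    intro k hk
    have := mS k
    rw [hSxy] at this
    simp at this
    tauto
  have hx : x ≤ d := ((mS x).1 (by simp [hSxy])).1
  have hy : y ≤ d := ((mS y).1 (by simp [hSxy])).1
  by_cases h1 : x + 1 = y
  · exact ⟨x, by omega, by subst h1; exact key⟩
  by_cases h1' : y + 1 = x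
  · exact ⟨y, by omega, by subst h1'; intro k hk; rw [key k hk]; tauto⟩
  exfalso
  rcases Nat.lt_or_gt_of_ne hxy with h | h
  · exact th2 F C hd2 hdn u0 ud us x y (by omega) (by omega) key
  · exact th2 F C hd2 hdn u0 ud us y x (by omega) (by omega)
      (by intro k hk; rw [key k hk]; tauto)

open Classical in
lemma one (C : Cf G R u v n g) (hdn : d + 1 ≤ n) (m : ℕ) (hm : d < m) (hmn : m < n)
    (h : ∀ k, d < k → k < n → (G.Adj v (g k) ↔ k = m)) :
    (∃ c0, c0 ≤ d ∧ G.Adj v (g c0)) ∧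
    Even ((Finset.range (d + 1)).filter (fun k => G.Adj v (g k))).card := by
  have e : (Finset.range n).filter (fun k => G.Adj v (g k)) =
      insert m ((Finset.range (d + 1)).filter (fun k => G.Adj v (g k))) := by
    ext k
    simp only [Finset.mem_filter, Finset.mem_range, Finset.mem_insert]
    grind
  have h3 := C.v3
  have ho := C.vo
  rw [C.card_aux v, e, Finset.card_insert_of_notMem (by simp; omega)] at h3 ho
  refine ⟨?_, ?_⟩
  · have : 0 < ((Finset.range (d + 1)).filter (fun k => G.Adj v (g k))).card := by omega
    obtain ⟨k, hk⟩ := Finset.card_pos.1 this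
    simp only [Finset.mem_filter, Finset.mem_range] at hk
    exact ⟨k, by omega, hk.2⟩
  · rcases ho with ⟨t, ht⟩
    exact ⟨t, by omega⟩

lemma lemA (F : Free G) (C : Cf G R u v n g) (hd2 : 2 ≤ d) (hdn : n = d + 2)
    (u0 : G.Adj u (g 0)) (ud : G.Adj u (g d)) (us : ∀ k, 0 < k → k < d → ¬ G.Adj u (g k))
    (u1 : G.Adj u (g (d + 1))) (v1 : G.Adj v (g (d + 1))) : CusV G R u v := by
  obtain ⟨⟨c0, hc0, vc0⟩, he⟩ := one C (d := d) (by omega) (d + 1) (by omega) (by omega) (by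
    intro k h1 h2
    have : k = d + 1 := by omega
    subst this; simp [v1])
  obtain ⟨c, hc, hv⟩ := even2 F C hd2 (by omega) u0 ud us c0 hc0 vc0 he
  have hv' : ∀ k < n, G.Adj v (g k) ↔ k = c ∨ k = c + 1 ∨ k = d + 1 := by
    intro k hk
    by_cases k ≤ d
    · rw [hv k (by omega)]; omega
    · have : k = d + 1 := by omega
      subst this; simp [v1]
  have hu' : ∀ k < n, G.Adj u (g k) ↔ k = 0 ∨ k = d ∨ k = d + 1 := by
    intro k hk
    constructor
    · intro h
      by_contra hcon
      exact us k (by omega) (by omega) h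
    · rintro (rfl | rfl | rfl) <;> assumption
  by_cases hc0 : c = 0
  · subst hc0
    refine C.cus d (d + 1) 0 1 (by omega) (by omega) (by omega) (by omega) ?_ ?_ ?_ (by omega)
      (by omega) ?_ ?_
    · unfold cyc; omega
    · unfold cyc; omega
    · unfold cyc; omega
    · intro k hk; rw [hu' k hk]; omega
    · intro k hk; rw [hv' k hk]; omega
  by_cases hcd : c + 1 = d
  · refine C.cus 0 (d + 1) d c (by omega) (by omega) (by omega) (by omega) ?_ ?_ ?_ (by omega)
      (by omega) ?_ ?_
    · unfold cyc; omega
    · unfold cyc; omega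
    · unfold cyc; omega
    · intro k hk; rw [hu' k hk]; omega
    · intro k hk; rw [hv' k hk]; omega
  exfalso
  refine pyr3 F (C.rot (d + 1) (by omega)) (c + 1) (by omega) (by omega) ?_
  intro k hk
  rw [hv' _ (by unfold rot; split <;> omega)]
  unfold rot; split <;> omega

/-- `v ~ d+1` only outside the sector. -/
lemma crossB (F : Free G) (C : Cf G R u v n g) (hd2 : 2 ≤ d) (hdn : d + 3 ≤ n)
    (u0 : G.Adj u (g 0)) (ud : G.Adj u (g d)) (us : ∀ k, 0 < k → k < d → ¬ G.Adj u (g k))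
    (h : ∀ k, d < k → k < n → (G.Adj v (g k) ↔ k = d + 1)) : CusV G R u v := by
  obtain ⟨⟨c0, hc0, vc0⟩, he⟩ := one C (d := d) (by omega) (d + 1) (by omega) (by omega) h
  obtain ⟨c, hc, hv⟩ := even2 F C hd2 (by omega) u0 ud us c0 hc0 vc0 he
  have hv' : ∀ k < n, G.Adj v (g k) ↔ k = c ∨ k = c + 1 ∨ k = d + 1 := by
    intro k hk
    by_cases k ≤ d
    · rw [hv k (by omega)]; omega
    · rw [h k (by omega) hk]; omega
  by_cases hcd : c + 1 = d
  · refine (lemA F (C.swap.rot (d + 1) (by omega)) (d := n - 2) (by omega) (by omega) ?_ ?_ ?_ ?_ ?_).swap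
    · skip
      rw [hv' _ (by unfold rot; split <;> omega)]; unfold rot; split <;> omega
    · skip
      rw [hv' _ (by unfold rot; split <;> omega)]; unfold rot; split <;> omega
    · intro k h1 h2
      rw [hv' _ (by unfold rot; split <;> omega)]; unfold rot; split <;> omega
    · skip
      rw [hv' _ (by unfold rot; split <;> omega)]; unfold rot; split <;> omega
    · skip
      have : TW.rot n (d + 1) (n - 2 + 1) = d := by unfold rot; split <;> omega
      rw [this]; exact ud
  exfalso
  refine pyr3 F (C.rot (d + 1) (by omega)) (c + n - d - 1) (by omega) (by omega) ?_
  intro k hk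
  rw [hv' _ (by unfold rot; split <;> omega)]
  unfold rot; split <;> omega

open Classical in
lemma cross (F : Free G) (C : Cf G R u v n g) (hd2 : 2 ≤ d) (hdn : d + 2 ≤ n)
    (u0 : G.Adj u (g 0)) (ud : G.Adj u (g d)) (us : ∀ k, 0 < k → k < d → ¬ G.Adj u (g k))
    (c0 : ℕ) (hc0 : 0 < c0) (hc0d : c0 < d) (vc0 : G.Adj v (g c0))
    (m : ℕ) (hm : d < m) (hmn : m < n) (vm : G.Adj v (g m)) : CusV G R u v := by
  have e0 : TW.mir n d 0 = d := by simp [TW.mir]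
  have ed : TW.mir n d d = 0 := by simp [TW.mir]
  have es : ∀ k, k ≤ d → TW.mir n d k = d - k := by intro k hk; unfold TW.mir; split <;> omega
  have et : ∀ k, d < k → TW.mir n d k = n + d - k := by intro k hk; unfold TW.mir; split <;> omega
  by_cases hA : ∀ k, d + 2 ≤ k → k + 2 ≤ n → ¬ G.Adj u (g k)
  · have hu : ∀ k < n, G.Adj u (g k) → k = 0 ∨ k = d ∨ k = d + 1 ∨ k = n - 1 := by
      intro k hk h
      by_contra hcon
      by_cases k < d
      · exact us k (by omega) (by omega) h
      · exact hA k (by omega) (by omega) h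
    have h3 := C.u3
    have ho := C.uo
    rw [C.card_aux u] at h3 ho
    by_cases u1 : G.Adj u (g (d + 1))
    · by_cases hn : n = d + 2
      · have : m = d + 1 := by omega
        subst this
        exact lemA F C hd2 hn u0 ud us u1 vm
      · by_cases u2 : G.Adj u (g (n - 1))
        · exfalso
          have e : (Finset.range n).filter (fun k => G.Adj u (g k)) = {0, d, d + 1, n - 1} := by
            ext k
            simp only [Finset.mem_filter, Finset.mem_range, Finset.mem_insert, Finset.mem_singleton]
            constructor
            · rintro ⟨h1, h2⟩; exact hu k h1 h2
            · rintro (rfl | rfl | rfl | rfl)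
              · exact ⟨by omega, u0⟩
              · exact ⟨by omega, ud⟩
              · exact ⟨by omega, u1⟩
              · exact ⟨by omega, u2⟩
          rw [e, Finset.card_insert_of_notMem, Finset.card_insert_of_notMem,
            Finset.card_insert_of_notMem, Finset.card_singleton] at ho
          · revert ho; decide
          · simp; omega
          · simp; omega
          · simp; omega
        · exfalso
          refine pyr3 F C.swap d hd2 (by omega) ?_
          intro k hk
          constructor
          · intro h; rcases hu k hk h with h' | h' | h' | h'
            · simp [h']
            · simp [h']
            · simp [h']
            · subst h'; exact absurd h u2
          · rintro (rfl | rfl | rfl) <;> assumption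
    · have u2 : G.Adj u (g (n - 1)) := by
        by_contra u2
        have e : (Finset.range n).filter (fun k => G.Adj u (g k)) ⊆ {0, d} := by
          intro k
          simp only [Finset.mem_filter, Finset.mem_range, Finset.mem_insert, Finset.mem_singleton]
          rintro ⟨h1, h2⟩
          rcases hu k h1 h2 with h' | h' | h' | h'
          · simp [h']
          · simp [h']
          · subst h'; exact absurd h2 u1
          · subst h'; exact absurd h2 u2
        have := Finset.card_le_card e
        have := Finset.card_le_two (a := 0) (b := d)
        omega
      have hn : n ≠ d + 2 := by
        rintro rfl
        exact u1 u2
      exfalso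
      refine pyr3 F (C.swap.mir d (by omega)) d hd2 (by omega) ?_
      intro k hk
      have hl : TW.mir n d k < n := by unfold TW.mir; split <;> omega
      constructor
      · intro h; rcases hu _ hl h with h' | h' | h' | h'
        · unfold TW.mir at h'; split at h' <;> omega
        · unfold TW.mir at h'; split at h' <;> omega
        · rw [h'] at h; exact absurd h u1
        · unfold TW.mir at h'; split at h' <;> omega
      · rintro (rfl | rfl | rfl)
        · rwa [e0]
        · rwa [ed]
        · rwa [et _ (by omega), show n + d - (d + 1) = n - 1 by omega]
  · push Not at hA
    obtain ⟨q, hq1, hq2, uq⟩ := hA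
    have hvn : ∀ k, d + 2 ≤ k → k + 2 ≤ n → ¬ G.Adj v (g k) := fun k h1 h2 h3 =>
      noPath F C hd2 hdn u0 ud us c0 hc0 hc0d vc0 k q h1 h2 hq1 hq2 h3 uq
    by_cases v1 : G.Adj v (g (d + 1))
    · by_cases v2 : G.Adj v (g (n - 1))
      · exfalso
        refine KC.false F (d := d) (g := g) (R := R) (u := u) (v := v) (n := n)
          ⟨C, hd2, by omega, u0, ud, us, v2, v1, ?_, ⟨c0, hc0, hc0d, vc0⟩, ⟨q, by omega, by omega, uq⟩⟩
        intro k h1 h2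
        exact hvn k (by omega) (by omega)
      · refine crossB F C hd2 (by omega) u0 ud us ?_
        intro k h1 h2
        constructor
        · intro h
          by_contra hcon
          by_cases hk : k = n - 1
          · subst hk; exact v2 h
          · exact hvn k (by omega) (by omega) h
        · rintro rfl; exact v1
    · have v2 : G.Adj v (g (n - 1)) := by
        by_cases h1 : m = d + 1
        · subst h1; exact absurd vm v1
        by_cases h2 : m = n - 1
        · subst h2; exact vm
        · exact absurd vm (hvn m (by omega) (by omega))
      refine crossB F (C.mir d (by omega)) (d := d) hd2 (by omega) ?_ ?_ ?_ ?_
      · rwa [e0]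
      · rwa [ed]
      · intro k h1 h2; rw [es k (by omega)]; exact us _ (by omega) (by omega)
      · intro k h1 h2
        rw [et k (by omega)]
        constructor
        · intro h
          by_contra hcon
          by_cases hk : n + d - k = d + 1
          · rw [hk] at h; exact v1 h
          · exact hvn _ (by omega) (by omega) h
        · rintro rfl; rwa [show n + d - (d + 1) = n - 1 by omega]

lemma comm (F : Free G) (C : Cf G R u v n g) (i j : ℕ) (hi : i < n) (hj : j < n) (hij : i ≠ j)
    (ui : G.Adj u (g i)) (uj : G.Adj u (g j)) (vi : G.Adj v (g i)) (vj : G.Adj v (g j)) :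
    cyc n i j := by
  by_contra hcon
  have E := C.emb
  refine F.sq (square E (a := n) (b := i) (c := n + 1) (d := j) (by omega) (by omega)
      (by omega) (by omega) (by omega) (by omega) ?_ ?_ ?_ ?_ ?_ ?_)
  all_goals (unfold AA; grind)

open Classical in
lemma priv (F : Free G) (C : Cf G R u v n g) : ∃ m < n, G.Adj v (g m) ∧ ¬ G.Adj u (g m) := by
  by_contra! hcon
  have h3 := C.v3
  have hn := C.hn
  rw [C.card_aux v] at h3
  obtain ⟨a, ha, b, hb, c, hc, ab, ac, bc⟩ := Finset.two_lt_card.1 h3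
  simp only [Finset.mem_filter, Finset.mem_range] at ha hb hc
  have h1 := comm F C a b ha.1 hb.1 ab (hcon a ha.1 ha.2) (hcon b hb.1 hb.2) ha.2 hb.2
  have h2 := comm F C a c ha.1 hc.1 ac (hcon a ha.1 ha.2) (hcon c hc.1 hc.2) ha.2 hc.2
  have h4 := comm F C b c hb.1 hc.1 bc (hcon b hb.1 hb.2) (hcon c hc.1 hc.2) hb.2 hc.2
  unfold cyc at h1 h2 h4
  omega

open Classical in
lemma mainC (F : Free G) (C : Cf G R u v n g) (v0 : G.Adj v (g 0)) (u0 : ¬ G.Adj u (g 0)) :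
    CusV G R u v ∨ ∃ s < n, ∃ d, 1 ≤ d ∧ d < n ∧
      (∀ k < n, G.Adj u (g (TW.rot n s k)) → k = 0 ∨ d ≤ k) ∧
      (∀ k < n, G.Adj v (g (TW.rot n s k)) → k ≤ d) := by
  have h3 := C.u3
  have hn := C.hn
  rw [C.card_aux u] at h3
  obtain ⟨x, hx, y, hy, z, hz, xy, xz, yz⟩ := Finset.two_lt_card.1 h3
  simp only [Finset.mem_filter, Finset.mem_range] at hx hy hz
  obtain ⟨a, ha1, ha2, ha3⟩ := first (fun k => G.Adj u (g k)) x hx.2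
  obtain ⟨b, hb1, hb2, hb3, hb4⟩ := last (fun k => G.Adj u (g k)) x (n - 1) (by omega) hx.2
  have a0 : a ≠ 0 := by rintro rfl; exact u0 ha2
  have ha' : ∀ k < n, G.Adj u (g k) → a ≤ k := by
    intro k hk h; by_contra hcon; exact ha3 k (by omega) h
  have hb' : ∀ k < n, G.Adj u (g k) → k ≤ b := by
    intro k hk h; by_contra hcon; exact hb4 k (by omega) (by omega) h
  have q1 := ha' _ hx.1 hx.2
  have q2 := ha' _ hy.1 hy.2
  have q3 := ha' _ hz.1 hz.2
  have q4 := hb' _ hx.1 hx.2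
  have q5 := hb' _ hy.1 hy.2
  have q6 := hb' _ hz.1 hz.2
  have hab : a + 2 ≤ b := by omega
  have hr : ∀ k < n, TW.rot n b k < n := by intro k hk; unfold TW.rot; split <;> omega
  have hul : ∀ k < n, G.Adj u (g (TW.rot n b k)) → k = 0 ∨ a + n - b ≤ k := by
    intro k hk h
    have t1 := ha' _ (hr k hk) h
    have t2 := hb' _ (hr k hk) h
    unfold TW.rot at t1 t2
    split at t1 <;> split at t2 <;> omega
  by_cases hv : ∀ k < n, G.Adj v (g (TW.rot n b k)) → k ≤ a + n - b
  · exact Or.inr ⟨b, by omega, a + n - b, by omega, by omega, hul, hv⟩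
  · left
    push Not at hv
    obtain ⟨m, hm, vm, hml⟩ := hv
    refine cross F (C.rot b (by omega)) (d := a + n - b) (by omega) (by omega) ?_ ?_ ?_ (n - b)
      (by omega) (by omega) ?_ m hml hm vm
    · have : TW.rot n b 0 = b := by unfold TW.rot; split <;> omega
      rwa [this]
    · have : TW.rot n b (a + n - b) = a := by unfold TW.rot; split <;> omega
      rwa [this]
    · intro k h1 h2 h
      have := hul k (by omega) h
      omega
    · have : TW.rot n b (n - b) = 0 := by unfold TW.rot; split <;> omega
      rwa [this]

open Classical in
lemma nestC (F : Free G) (C : Cf G R u v n g) (d : ℕ) (hd : 1 ≤ d) (hdn : d < n)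
    (hu : ∀ k < n, G.Adj u (g k) → k ≤ d) (hv : ∀ k < n, G.Adj v (g k) → k = 0 ∨ d ≤ k)
    (i j : ℕ) (hi : i < n) (hj : j < n) (ui : G.Adj u (g i)) (vi : G.Adj v (g i))
    (uj : G.Adj u (g j)) (vj : G.Adj v (g j)) : i = j := by
  by_contra hij
  have h1 := comm F C i j hi hj hij ui uj vi vj
  have hn := C.hn
  have t1 := hu i hi ui
  have t2 := hu j hj uj
  have t3 := hv i hi vi
  have t4 := hv j hj vj
  have hdd : d = 1 ∨ d = n - 1 := by
    unfold cyc at h1; omega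
  rcases hdd with hdd | hdd
  · have h3 := C.u3
    rw [C.card_aux u] at h3
    obtain ⟨x, hx, y, hy, z, hz, xy, xz, yz⟩ := Finset.two_lt_card.1 h3
    simp only [Finset.mem_filter, Finset.mem_range] at hx hy hz
    have q1 := hu _ hx.1 hx.2
    have q2 := hu _ hy.1 hy.2
    have q3 := hu _ hz.1 hz.2
    omega
  · have h3 := C.v3
    rw [C.card_aux v] at h3
    obtain ⟨x, hx, y, hy, z, hz, xy, xz, yz⟩ := Finset.two_lt_card.1 h3
    simp only [Finset.mem_filter, Finset.mem_range] at hx hy hz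
    have q1 := hv _ hx.1 hx.2
    have q2 := hv _ hy.1 hy.2
    have q3 := hv _ hz.1 hz.2
    omega

lemma castInj {i j : ℕ} (hi : i < n) (hj : j < n) (e : (i : ZMod n) = j) : i = j := by
  rw [ZMod.natCast_eq_natCast_iff', Nat.mod_eq_of_lt hi, Nat.mod_eq_of_lt hj] at e
  exact e

lemma castSucc (hn : 2 ≤ n) {i j : ℕ} (hi : i < n) (hj : j < n) :
    (j : ZMod n) = i + 1 ↔ (i + 1 = j ∨ (j = 0 ∧ i + 1 = n)) := by
  have : ((i : ZMod n) + 1) = ((i + 1 : ℕ) : ZMod n) := by push_cast; rfl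
  rw [this]
  constructor
  · intro e
    by_cases h : i + 1 < n
    · exact Or.inl (castInj hj h e).symm
    · have h' : i + 1 = n := by omega
      rw [h', ZMod.natCast_self] at e
      right
      exact ⟨castInj (n := n) hj (by omega) (by simpa using e), h'⟩
  · rintro (h | ⟨rfl, h⟩)
    · rw [h]
    · rw [h]; simp

lemma mkCf {f : ZMod n → V} (hEW : ¬ContainsEvenWheel G)
    (hW : Is2WheelCfg G n f u v) (huv : ¬G.Adj u v) (s : ZMod n) :
    Cf G (Set.range f) u v n (fun k => f (s + (k : ZMod n))) := by
  obtain ⟨hole, ne, uR, vR, u3, v3⟩ := hW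
  have hole' := hole
  obtain ⟨hn, finj, fadj⟩ := hole
  have : NeZero n := ⟨by omega⟩
  have hc : ∀ w, {x | x ∈ Set.range f ∧ G.Adj w x}.ncard = {m : ZMod n | G.Adj w (f m)}.ncard := by
    intro w
    rw [← Set.ncard_image_of_injective _ finj]
    congr 1
    ext x
    constructor
    · rintro ⟨⟨m, rfl⟩, h⟩; exact ⟨m, h, rfl⟩
    · rintro ⟨m, h, rfl⟩; exact ⟨⟨m, rfl⟩, h⟩
  have ho : ∀ w, w ∉ Set.range f → 3 ≤ {m : ZMod n | G.Adj w (f m)}.ncard →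
      Odd {m : ZMod n | G.Adj w (f m)}.ncard := by
    intro w h1 h2
    by_contra h
    rw [Nat.not_odd_iff_even] at h
    exact hEW ⟨n, f, w, hole', h1, h2, h⟩
  refine ⟨hn, ?_, ?_, ?_, uR, vR, ne, huv, ?_, ?_, ?_, ?_⟩
  · intro i j hi hj e
    exact castInj hi hj (add_left_cancel (finj e))
  · intro i j hi hj
    rw [fadj, add_assoc, add_assoc, add_right_inj, add_right_inj, castSucc (by omega) hi hj,
      castSucc (by omega) hj hi]
    unfold cyc
    omega
  · intro x
    constructor
    · rintro ⟨m, rfl⟩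
      exact ⟨(m - s).val, ZMod.val_lt _, by simp⟩
    · rintro ⟨k, _, rfl⟩; exact ⟨_, rfl⟩
  · rw [hc]; exact u3
  · rw [hc]; exact v3
  · rw [hc]; exact ho u uR u3
  · rw [hc]; exact ho v vR v3

lemma cusOut {f : ZMod n → V} (hole : IsHoleEmb G n f) (H : CusV G (Set.range f) u v) :
    CousinCfg G n f u v := by
  obtain ⟨hn, finj, fadj⟩ := hole
  obtain ⟨_, _, _, _, ⟨p, rfl⟩, ⟨q, rfl⟩, ⟨r, rfl⟩, ⟨s, rfl⟩, pq, qr, rs, pr, qs, h1, h2⟩ := H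
  have h1 : ∀ m, G.Adj u (f m) ↔ m = p ∨ m = q ∨ m = r := by
    intro m; rw [h1 _ ⟨m, rfl⟩, finj.eq_iff, finj.eq_iff, finj.eq_iff]
  have h2 : ∀ m, G.Adj v (f m) ↔ m = q ∨ m = r ∨ m = s := by
    intro m; rw [h2 _ ⟨m, rfl⟩, finj.eq_iff, finj.eq_iff, finj.eq_iff]
  have pr : p ≠ r := fun e => pr (e ▸ rfl)
  have qs : q ≠ s := fun e => qs (e ▸ rfl)
  rw [fadj] at pq qr rs
  rcases pq with pq | pq
  · have qr : r = q + 1 := by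
      rcases qr with h | h
      · exact h
      · exact absurd (add_right_cancel (pq ▸ h)) pr
    have rs : s = r + 1 := by
      rcases rs with h | h
      · exact h
      · exact absurd (add_right_cancel (qr ▸ h)) qs
    left
    refine ⟨p, ?_, ?_⟩
    · intro m; rw [h1, qr, pq, add_assoc, one_add_one_eq_two]
    · intro m; rw [h2, rs, qr, pq, add_assoc, one_add_one_eq_two, add_assoc, two_add_one_eq_three]
  · have qr : q = r + 1 := by
      rcases qr with h | h
      · exact absurd (pq.trans h.symm) pr
      · exact h
    have rs : r = s + 1 := by
      rcases rs with h | h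
      · exact absurd (qr.trans h.symm) qs
      · exact h
    right
    refine ⟨s, ?_, ?_⟩
    · intro m; rw [h2, qr, rs, add_assoc, one_add_one_eq_two]; tauto
    · intro m
      have e2 : s + 1 + 1 = s + 2 := by ring
      have e3 : s + 2 + 1 = s + 3 := by ring
      rw [h1, pq, qr, rs, e2, e3]
      tauto

theorem main (G : SimpleGraph V)
    (hTheta : ¬ContainsTheta G) (hPyr : ¬ContainsPyramid G)
    (hEW : ¬ContainsEvenWheel G) (hSq : ¬ContainsSquare G)
    (n : ℕ) (f : ZMod n → V) (u v : V)
    (hW : Is2WheelCfg G n f u v) (huv : ¬G.Adj u v) :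
    (NestedCfg G n f u v ∨ CousinCfg G n f u v) ∧
    (NestedCfg G n f u v → {m : ZMod n | G.Adj u (f m) ∧ G.Adj v (f m)}.ncard ≤ 1) := by
  have F : Free G := ⟨hTheta, hPyr, hEW, hSq⟩
  have hn : 4 ≤ n := hW.1.1
  have : NeZero n := ⟨by omega⟩
  have cs : ∀ d, d ≤ n → ((n - d : ℕ) : ZMod n) = - (d : ZMod n) := by
    intro d hd; rw [Nat.cast_sub hd]; simp
  constructor
  · obtain ⟨m, hm, vm, um⟩ := priv F (mkCf hEW hW huv 0)
    rw [zero_add] at vm um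
    rcases mainC F (mkCf hEW hW huv (m : ZMod n)) (by simpa using vm) (by simpa using um) with
      h | ⟨s, hs, d, hd, hdn, hu, hv⟩
    · exact Or.inr (cusOut hW.1 h)
    left
    have er : ∀ k, ((TW.rot n s k : ℕ) : ZMod n) = k + s := by
      intro k
      unfold TW.rot
      split
      · push_cast; rfl
      · rw [Nat.cast_sub (by omega)]; push_cast; simp
    refine ⟨m + s + d, n - d, by omega, by omega, ?_, ?_⟩
    · intro x hx
      have e : (m : ZMod n) + ((TW.rot n s (x - ((m : ZMod n) + (s : ZMod n))).val : ℕ) : ZMod n) = x := by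
        rw [er, ZMod.natCast_zmod_val]; ring
      have hl := ZMod.val_lt (x - ((m : ZMod n) + (s : ZMod n)))
      have ek : (((x - ((m : ZMod n) + (s : ZMod n))).val : ℕ) : ZMod n) = x - ((m : ZMod n) + (s : ZMod n)) := ZMod.natCast_zmod_val _
      rcases hu (x - ((m : ZMod n) + (s : ZMod n))).val hl (by rw [e]; exact hx) with h | h
      · refine ⟨n - d, le_rfl, ?_⟩
        rw [h] at ek
        rw [cs d hdn.le]
        push_cast at ek
        linear_combination -ek
      · refine ⟨(x - ((m : ZMod n) + (s : ZMod n))).val - d, by omega, ?_⟩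
        rw [Nat.cast_sub h, ek]; ring
    · intro x hx
      have e : (m : ZMod n) + ((TW.rot n s (x - ((m : ZMod n) + (s : ZMod n))).val : ℕ) : ZMod n) = x := by
        rw [er, ZMod.natCast_zmod_val]; ring
      have hl := ZMod.val_lt (x - ((m : ZMod n) + (s : ZMod n)))
      have ek : (((x - ((m : ZMod n) + (s : ZMod n))).val : ℕ) : ZMod n) = x - ((m : ZMod n) + (s : ZMod n)) := ZMod.natCast_zmod_val _
      have h := hv (x - ((m : ZMod n) + (s : ZMod n))).val hl (by rw [e]; exact hx)
      refine ⟨(x - ((m : ZMod n) + (s : ZMod n))).val, by omega, ?_⟩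
      rw [cs d hdn.le, ek]; ring
  · rintro ⟨i, d, hd, hdn, hu, hv⟩
    have C := mkCf hEW hW huv i
    rw [Set.ncard_le_one_iff]
    intro a b ha hb
    have ek : ∀ x : ZMod n, i + (((x - i).val : ℕ) : ZMod n) = x := by
      intro x; rw [ZMod.natCast_zmod_val]; ring
    have hl := fun x : ZMod n => ZMod.val_lt (x - i)
    have := nestC F C d hd hdn ?_ ?_ (a - i).val (b - i).val (hl a) (hl b) (by rw [ek]; exact ha.1)
      (by rw [ek]; exact ha.2) (by rw [ek]; exact hb.1) (by rw [ek]; exact hb.2)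
    · rw [← ek a, this, ek b]
    · intro k hk h
      obtain ⟨e, he, h'⟩ := hu _ h
      have := castInj hk (by omega) (add_left_cancel h')
      omega
    · intro k hk h
      obtain ⟨e, he, h'⟩ := hv _ h
      rw [add_assoc] at h'
      have h' := add_left_cancel h'
      by_cases hde : d + e = n
      · left
        rw [← Nat.cast_add, hde, ZMod.natCast_self] at h'
        exact castInj (n := n) hk (by omega) (by simpa using h')
      · right
        rw [← Nat.cast_add] at h'
        have := castInj hk (by omega) h'
        omega

end TW

/-- In a (theta, prism, pyramid, even wheel, square)-free graph, every
2-wheel with non-adjacent centers is a nested wheel or a cousin wheel; moreover a nested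
such 2-wheel satisfies `|N_H(u) ∩ N_H(v)| ≤ 1`. -/
theorem statement6 (G : SimpleGraph V)
    (hTheta : ¬ContainsTheta G) (hPrism : ¬ContainsPrism G) (hPyr : ¬ContainsPyramid G)
    (hEW : ¬ContainsEvenWheel G) (hSq : ¬ContainsSquare G)
    (n : ℕ) (f : ZMod n → V) (u v : V)
    (hW : Is2WheelCfg G n f u v) (huv : ¬G.Adj u v) :
    (NestedCfg G n f u v ∨ CousinCfg G n f u v) ∧
    (NestedCfg G n f u v → {m : ZMod n | G.Adj u (f m) ∧ G.Adj v (f m)}.ncard ≤ 1) := by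
  exact TW.main G hTheta hPyr hEW hSq n f u v hW huv
end
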